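/- arXiv:1205.0849 — 2 statements merged into one kernel-verified Lean document; each statement's English description precedes it below -/
import Mathlib

section
/- Let p > 1 and let u be a nonzero global Schwartz solution of the defocusing generalized KdV equation ∂_t u + ∂_x^3 u = ∂_x(|u|^{p-1} u). Then for all t ∈ ℝ, d/dt ∫_ℝ (x − ⟨x⟩_M(t))² u²(t,x) dx = −12 E(u) (⟨x⟩_E(t) − ⟨x⟩_M(t)) − ((4p − 12)/(p+1)) ∫_ℝ (x − ⟨x⟩_M(t)) |u(t,x)|^{p+1} dx, where ⟨x⟩_M(t) = (1/M(u)) ∫ x u²(t,x) dx and ⟨x⟩_E(t) = (1/E(u)) ∫ x (½ (∂_x u)²(t,x) + |u(t,x)|^{p+1}/(p+1)) dx. -/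
open MeasureTheory Real

/-!
Testing the equation against `2 φ u` gives
`d/dt ∫ φ u² = ∫ (φ''' u² - φ' (3 (∂ₓ u)² + 2 p / (p + 1) |u| ^ (p + 1)))`; for `φ = (x - a) ^ 2`
this is the asserted identity about a fixed center `a`, and moving the center contributes nothing to
first order. What has to be justified is differentiation under the integral, because the Schwartz
seminorms of `u t` are not assumed to be locally bounded in `t`.

For bounded weights, conservation of mass makes `∫ φ (u s - u t)²` differentiable at `s = t` with
derivative zero whatever the bounded `φ` is: it is dominated by `∫ (u s - u t)²`, whose derivative
vanishes there. The linear part `∫ u s K` is differentiable for `K ∈ L²` by density of test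
functions, since `t ↦ u t` is Lipschitz in `L²`. The energy density is handled in the same way
through the convexity remainder of the energy.

For the quadratic weight one needs second moments of the energy density, locally uniformly in time.
Kato's monotone weights control them on the right half-line by Gronwall's inequality forwards in
time; the symmetry `u t x ↦ u (-t) (-x)` gives the left half-line. Then
`2 (1 - cos (c (x - a))) / c²` is a family of bounded weights for which the identity passes to the
limit `c → 0`.
-/

namespace GKdV

open Filter Topology
open scoped SchwartzMap

section FunctionClasses

variable {V : Type*} [NormedAddCommGroup V] {F G : V → ℝ}

/-- Continuous functions of at most polynomial growth: the weights against which densities are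
integrated. Unlike `Function.HasTemperateGrowth`, no smoothness is required. -/
@[fun_prop]
structure PolyGrowth (F : V → ℝ) : Prop where
  continuous : Continuous F
  bound : ∃ (C : ℝ) (k : ℕ), 0 ≤ C ∧ ∀ x, |F x| ≤ C * (1 + ‖x‖) ^ k

/-- Continuous functions decaying faster than any power: the class of the densities built from a
Schwartz function. It contains the non-smooth powers `|f| ^ p`. -/
@[fun_prop]
structure RapidDecay (F : V → ℝ) : Prop where
  continuous : Continuous F
  decay : ∀ k : ℕ, ∃ C : ℝ, 0 ≤ C ∧ ∀ x, (1 + ‖x‖) ^ k * |F x| ≤ C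

namespace PolyGrowth

theorem of_bounded (hF : Continuous F) {C : ℝ} (h : ∀ x, |F x| ≤ C) : PolyGrowth F :=
  ⟨hF, C, 0, (abs_nonneg _).trans (h 0), by simpa using h⟩

@[fun_prop]
theorem const (c : ℝ) : PolyGrowth (fun _ : V => c) :=
  of_bounded continuous_const fun _ => le_rfl

@[fun_prop]
theorem id : PolyGrowth (fun x : ℝ => x) :=
  ⟨continuous_id, 1, 1, zero_le_one, fun x => by simp⟩

@[fun_prop]
theorem mul (hF : PolyGrowth F) (hG : PolyGrowth G) : PolyGrowth (fun x => F x * G x) := by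
  obtain ⟨hFc, C, k, hC, hFb⟩ := hF
  obtain ⟨hGc, C', k', hC', hGb⟩ := hG
  refine ⟨hFc.mul hGc, C * C', k + k', by positivity, fun x => ?_⟩
  calc |F x * G x| = |F x| * |G x| := abs_mul _ _
    _ ≤ (C * (1 + ‖x‖) ^ k) * (C' * (1 + ‖x‖) ^ k') := by gcongr; exacts [hFb x, hGb x]
    _ = C * C' * (1 + ‖x‖) ^ (k + k') := by ring

@[fun_prop]
theorem add (hF : PolyGrowth F) (hG : PolyGrowth G) : PolyGrowth (fun x => F x + G x) := by
  obtain ⟨hFc, C, k, hC, hFb⟩ := hF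
  obtain ⟨hGc, C', k', hC', hGb⟩ := hG
  refine ⟨hFc.add hGc, C + C', k + k', by positivity, fun x => ?_⟩
  have hx : 1 ≤ 1 + ‖x‖ := by simp
  calc |F x + G x| ≤ |F x| + |G x| := abs_add_le _ _
    _ ≤ C * (1 + ‖x‖) ^ k + C' * (1 + ‖x‖) ^ k' := add_le_add (hFb x) (hGb x)
    _ ≤ C * (1 + ‖x‖) ^ (k + k') + C' * (1 + ‖x‖) ^ (k + k') := by
        gcongr <;> first | exact hx | omega
    _ = (C + C') * (1 + ‖x‖) ^ (k + k') := by ring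

@[fun_prop]
theorem sub (hF : PolyGrowth F) (hG : PolyGrowth G) : PolyGrowth (fun x => F x - G x) := by
  simpa [sub_eq_add_neg] using hF.add ((const (-1)).mul hG)

@[fun_prop]
theorem pow (hF : PolyGrowth F) (n : ℕ) : PolyGrowth (fun x => F x ^ n) := by
  induction n with
  | zero => simpa using const 1
  | succ n ih => simpa only [pow_succ] using ih.mul hF

end PolyGrowth

namespace RapidDecay

@[fun_prop]
theorem polyGrowth (hF : RapidDecay F) : PolyGrowth F := by
  obtain ⟨C, -, hC⟩ := hF.decay 0
  exact .of_bounded hF.continuous (by simpa using hC)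

@[fun_prop]
theorem mul_polyGrowth (hF : RapidDecay F) (hG : PolyGrowth G) :
    RapidDecay (fun x => F x * G x) := by
  obtain ⟨hGc, C', k', hC', hGb⟩ := hG
  refine ⟨hF.continuous.mul hGc, fun k => ?_⟩
  obtain ⟨C, hC, hFb⟩ := hF.decay (k + k')
  refine ⟨C * C', by positivity, fun x => ?_⟩
  calc (1 + ‖x‖) ^ k * |F x * G x| = (1 + ‖x‖) ^ k * (|F x| * |G x|) := by rw [abs_mul]
    _ ≤ (1 + ‖x‖) ^ k * (|F x| * (C' * (1 + ‖x‖) ^ k')) := by gcongr; exact hGb x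
    _ = ((1 + ‖x‖) ^ (k + k') * |F x|) * C' := by ring
    _ ≤ C * C' := by gcongr; exact hFb x

@[fun_prop]
theorem polyGrowth_mul (hF : PolyGrowth F) (hG : RapidDecay G) :
    RapidDecay (fun x => F x * G x) := by
  simpa only [mul_comm] using hG.mul_polyGrowth hF

@[fun_prop]
theorem add (hF : RapidDecay F) (hG : RapidDecay G) : RapidDecay (fun x => F x + G x) := by
  refine ⟨hF.continuous.add hG.continuous, fun k => ?_⟩
  obtain ⟨C, hC, hFb⟩ := hF.decay k
  obtain ⟨C', hC', hGb⟩ := hG.decay k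
  refine ⟨C + C', by positivity, fun x => ?_⟩
  calc (1 + ‖x‖) ^ k * |F x + G x| ≤ (1 + ‖x‖) ^ k * (|F x| + |G x|) := by
        gcongr; exact abs_add_le _ _
    _ ≤ C + C' := by rw [mul_add]; exact add_le_add (hFb x) (hGb x)

@[fun_prop]
theorem neg (hF : RapidDecay F) : RapidDecay (fun x => -F x) := by
  simpa using hF.mul_polyGrowth (.const (-1))

@[fun_prop]
theorem sub (hF : RapidDecay F) (hG : RapidDecay G) : RapidDecay (fun x => F x - G x) := by
  simpa only [sub_eq_add_neg] using hF.add hG.neg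

@[fun_prop]
theorem sq (hF : RapidDecay F) : RapidDecay (fun x => F x ^ 2) := by
  simpa only [pow_two] using hF.mul_polyGrowth hF.polyGrowth

@[fun_prop]
theorem div_const (hF : RapidDecay F) (c : ℝ) : RapidDecay (fun x => F x / c) := by
  simpa only [div_eq_mul_inv] using hF.mul_polyGrowth (.const c⁻¹)

@[fun_prop]
theorem abs (hF : RapidDecay F) : RapidDecay (fun x => |F x|) :=
  ⟨hF.continuous.abs, by simpa using hF.decay⟩

theorem integrable [MeasurableSpace V] [BorelSpace V] [SecondCountableTopology V]
    {μ : Measure V} [μ.HasTemperateGrowth] (hF : RapidDecay F) : Integrable F μ := by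
  obtain ⟨C, -, hC⟩ := hF.decay μ.integrablePower
  refine (μ.integrable_pow_neg_integrablePower.const_mul C).mono'
    hF.continuous.aestronglyMeasurable (ae_of_all _ fun x => ?_)
  rw [norm_eq_abs, rpow_neg (by positivity), rpow_natCast, ← div_eq_mul_inv,
    le_div_iff₀ (by positivity), mul_comm]
  exact hC x

theorem memLp_two [MeasurableSpace V] [BorelSpace V] [SecondCountableTopology V]
    {μ : Measure V} [μ.HasTemperateGrowth] (hF : RapidDecay F) : MemLp F 2 μ :=
  (memLp_two_iff_integrable_sq hF.continuous.aestronglyMeasurable).2 hF.sq.integrable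

end RapidDecay

@[fun_prop]
theorem rapidDecay_schwartz [NormedSpace ℝ V] (f : 𝓢(V, ℝ)) : RapidDecay (fun x => f x) := by
  refine ⟨f.continuous, fun k => ⟨2 ^ k * (Finset.Iic (k, 0)).sup
    (fun m => SchwartzMap.seminorm ℝ m.1 m.2) f, by positivity, fun x => ?_⟩⟩
  simpa using SchwartzMap.one_add_le_sup_seminorm_apply (𝕜 := ℝ) (m := (k, 0)) le_rfl le_rfl f x

end FunctionClasses

section Calculus

variable {α : Type*} [MeasurableSpace α] {μ : Measure α}

theorem integral_abs_mul_le_sqrt_mul_sqrt {F G : α → ℝ} (hF : MemLp F 2 μ) (hG : MemLp G 2 μ) :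
    ∫ x, |F x * G x| ∂μ ≤ √(∫ x, F x ^ 2 ∂μ) * √(∫ x, G x ^ 2 ∂μ) := by
  have hHolder := integral_mul_norm_le_Lp_mul_Lq Real.HolderConjugate.two_two
    (by simpa using hF) (by simpa using hG)
  simp only [norm_eq_abs, rpow_two, sq_abs, ← sqrt_eq_rpow] at hHolder
  simpa only [abs_mul] using hHolder

theorem abs_integral_mul_sub_integral_mul_le {F G H : α → ℝ} (hF : MemLp F 2 μ)
    (hG : MemLp G 2 μ) (hH : MemLp H 2 μ) :
    |(∫ x, F x * G x ∂μ) - ∫ x, F x * H x ∂μ|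
      ≤ √(∫ x, F x ^ 2 ∂μ) * √(∫ x, (G x - H x) ^ 2 ∂μ) := by
  have hsub : (∫ x, F x * G x ∂μ) - ∫ x, F x * H x ∂μ = ∫ x, F x * (G x - H x) ∂μ := by
    simp only [mul_sub]
    exact (integral_sub (hF.integrable_mul hG) (hF.integrable_mul hH)).symm
  rw [hsub]
  exact abs_integral_le_integral_abs.trans (integral_abs_mul_le_sqrt_mul_sqrt hF (hG.sub hH))

theorem exists_hasCompactSupport_sqrt_integral_sub_sq_le [TopologicalSpace α] [NormalSpace α]
    [R1Space α] [WeaklyLocallyCompactSpace α] [BorelSpace α] [μ.Regular] {K : α → ℝ}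
    (hK : MemLp K 2 μ) {ε : ℝ} (hε : 0 < ε) :
    ∃ G : α → ℝ, HasCompactSupport G ∧ Continuous G ∧ MemLp G 2 μ ∧
      √(∫ x, (K x - G x) ^ 2 ∂μ) ≤ ε := by
  obtain ⟨G, hGs, hKG, hG, hG2⟩ :=
    MemLp.exists_hasCompactSupport_integral_rpow_sub_le two_pos (by simpa using hK) (pow_pos hε 2)
  refine ⟨G, hGs, hG, by simpa using hG2, ?_⟩
  rw [sqrt_le_left hε.le]
  simpa [sq_abs] using hKG

/-- The quadratic remainders of the mass and of the energy density are nonnegative, and conservation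
makes their integrals stationary; boundedness of the weight then localizes this at no cost. -/
theorem hasDerivAt_integral_mul_zero_of_nonneg {φ : α → ℝ} {C : ℝ} {R : ℝ → α → ℝ} {t : ℝ}
    (hφ : ∀ x, |φ x| ≤ C) (hint : ∀ s, Integrable (R s) μ) (hR : ∀ s x, 0 ≤ R s x)
    (hRt : ∀ x, R t x = 0) (hderiv : HasDerivAt (fun s => ∫ x, R s x ∂μ) 0 t) :
    HasDerivAt (fun s => ∫ x, φ x * R s x ∂μ) 0 t := by
  rw [hasDerivAt_iff_isLittleO] at hderiv ⊢
  simp only [hRt, mul_zero, integral_zero, sub_zero, smul_zero] at hderiv ⊢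
  refine (Asymptotics.IsBigO.of_bound C (Eventually.of_forall fun s => ?_)).trans_isLittleO hderiv
  rw [norm_of_nonneg (integral_nonneg (hR s)), ← integral_const_mul]
  refine norm_integral_le_of_norm_le ((hint s).const_mul C) (ae_of_all _ fun x => ?_)
  rw [norm_eq_abs, abs_mul, abs_of_nonneg (hR s x)]
  exact mul_le_mul_of_nonneg_right (hφ x) (hR s x)

theorem hasDerivAt_of_approx {A : ℝ → ℝ} {A' t : ℝ}
    (happrox : ∀ ε > 0, ∃ (B : ℝ → ℝ) (B' : ℝ), HasDerivAt B B' t ∧ |B' - A'| ≤ ε ∧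
      ∀ s, |A s - A t - (B s - B t)| ≤ ε * |s - t|) : HasDerivAt A A' t := by
  rw [hasDerivAt_iff_isLittleO, Asymptotics.isLittleO_iff]
  intro c hc
  have hc3 : 0 < c / 3 := by positivity
  obtain ⟨B, B', hB, hB', hAB⟩ := happrox (c / 3) hc3
  filter_upwards [(hasDerivAt_iff_isLittleO.1 hB).bound hc3] with s hs
  simp only [norm_eq_abs, smul_eq_mul] at hs ⊢
  have hslope : |(s - t) * (B' - A')| ≤ c / 3 * |s - t| := by
    rw [abs_mul, mul_comm]
    gcongr
  calc |A s - A t - (s - t) * A'|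
      = |(A s - A t - (B s - B t)) + (B s - B t - (s - t) * B') + (s - t) * (B' - A')| := by
        ring_nf
    _ ≤ c / 3 * |s - t| + c / 3 * |s - t| + c / 3 * |s - t| :=
        (abs_add_three _ _ _).trans (by gcongr; exact hAB s)
    _ = c * |s - t| := by ring

theorem sqrt_le_of_abs_deriv_le_sqrt {w w' : ℝ → ℝ} {C t : ℝ} (hC : 0 ≤ C)
    (hw : ∀ s, HasDerivAt w (w' s) s) (hnonneg : ∀ s, 0 ≤ w s) (hwt : w t = 0)
    (hbound : ∀ s, |w' s| ≤ 2 * C * √(w s)) (s : ℝ) : √(w s) ≤ C * |s - t| := by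
  refine le_of_forall_pos_le_add fun δ hδ => ?_
  have hpos : ∀ r, 0 < w r + δ ^ 2 := fun r => add_pos_of_nonneg_of_pos (hnonneg r) (by positivity)
  have hderiv : ∀ r, HasDerivAt (fun r => √(w r + δ ^ 2)) (w' r / (2 * √(w r + δ ^ 2))) r :=
    fun r => ((hw r).add_const _).sqrt (hpos r).ne'
  have hderiv_le : ∀ r, ‖w' r / (2 * √(w r + δ ^ 2))‖ ≤ C := fun r => by
    have hsqrt : √(w r) ≤ √(w r + δ ^ 2) := sqrt_le_sqrt (by linarith [sq_nonneg δ])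
    rw [norm_eq_abs, abs_div, abs_of_pos (mul_pos two_pos (sqrt_pos.2 (hpos r))),
      div_le_iff₀ (mul_pos two_pos (sqrt_pos.2 (hpos r)))]
    calc |w' r| ≤ 2 * C * √(w r) := hbound r
      _ ≤ 2 * C * √(w r + δ ^ 2) := by gcongr
      _ = C * (2 * √(w r + δ ^ 2)) := by ring
  have hlip := convex_univ.norm_image_sub_le_of_norm_hasDerivWithin_le
    (fun r _ => (hderiv r).hasDerivWithinAt) (fun r _ => hderiv_le r)
    (Set.mem_univ t) (Set.mem_univ s)
  rw [hwt, zero_add, sqrt_sq hδ.le, norm_eq_abs, norm_eq_abs] at hlip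
  calc √(w s) ≤ √(w s + δ ^ 2) := sqrt_le_sqrt (by linarith [sq_nonneg δ])
    _ ≤ C * |s - t| + δ := by linarith [(le_abs_self _).trans hlip]

theorem hasDerivAt_integral_mul_of_hasCompactSupport [TopologicalSpace α] [OpensMeasurableSpace α]
    [IsFiniteMeasureOnCompacts μ] {v v' : ℝ → α → ℝ} {G : α → ℝ}
    (hv : ∀ s, Continuous (v s)) (hv' : Continuous (Function.uncurry v'))
    (hderiv : ∀ s x, HasDerivAt (fun r => v r x) (v' s x) s) (hG : Continuous G)
    (hGs : HasCompactSupport G) (t : ℝ) :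
    HasDerivAt (fun s => ∫ x, v s x * G x ∂μ) (∫ x, v' t x * G x ∂μ) t := by
  obtain ⟨C, hC⟩ := ((isCompact_closedBall t 1).prod hGs).exists_bound_of_continuousOn
    hv'.continuousOn
  have hint : ∀ F : α → ℝ, Continuous F → Integrable (fun x => F x * G x) μ := fun F hF =>
    (hF.mul hG).integrable_of_hasCompactSupport hGs.mul_left
  have hv't : Continuous (v' t) := hv'.comp (by fun_prop : Continuous fun x => (t, x))
  refine (hasDerivAt_integral_of_dominated_loc_of_deriv_le (bound := fun x => C * |G x|)
    (Metric.closedBall_mem_nhds t one_pos)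
    (Eventually.of_forall fun s => (hint _ (hv s)).aestronglyMeasurable) (hint _ (hv t))
    (hint _ hv't).aestronglyMeasurable (ae_of_all _ fun x s hs => ?_)
    ((hG.integrable_of_hasCompactSupport hGs).abs.const_mul C)
    (ae_of_all _ fun x s _ => (hderiv s x).mul_const _)).2
  rw [norm_eq_abs, abs_mul]
  by_cases hx : x ∈ tsupport G
  · gcongr
    exact hC (s, x) ⟨hs, hx⟩
  · simp [image_eq_zero_of_notMem_tsupport hx]

end Calculus

section OddPower

variable {p : ℝ}

/-- The nonlinearity `|y| ^ (p - 1) y` of the equation, i.e. the odd extension of `y ^ p`. -/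
noncomputable def oddPow (p y : ℝ) : ℝ := |y| ^ (p - 1) * y

theorem hasDerivAt_oddPow (hp : 1 < p) (x : ℝ) :
    HasDerivAt (oddPow p) (p * |x| ^ (p - 1)) x := by
  rcases eq_or_ne x 0 with rfl | hx
  · have hzero : |(0 : ℝ)| ^ (p - 1) = 0 := by rw [abs_zero, zero_rpow (by linarith)]
    have hcont : Continuous fun y : ℝ => |y| ^ (p - 1) :=
      continuous_abs.rpow_const fun _ => Or.inr (by linarith)
    rw [hzero, mul_zero, hasDerivAt_iff_tendsto_slope]
    refine Tendsto.congr' ?_ (hzero ▸ (hcont.tendsto 0).mono_left nhdsWithin_le_nhds)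
    filter_upwards [self_mem_nhdsWithin] with y hy
    rw [slope_def_field, oddPow, oddPow, mul_zero, sub_zero, sub_zero, mul_div_cancel_right₀ _ hy]
  · have hx' : |x| ≠ 0 := abs_ne_zero.2 hx
    have hpow : |x| ^ (p - 1) = |x| ^ (p - 1 - 1) * |x| := by
      rw [← rpow_add_one hx', sub_add_cancel]
    refine (((hasDerivAt_abs hx).rpow_const (p := p - 1) (Or.inl hx')).fun_mul
      (hasDerivAt_id' x)).congr_deriv ?_
    linear_combination (p - 1) * |x| ^ (p - 1 - 1) * sign_mul_self x - (p - 1) * hpow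

theorem oddPow_mul_self (hp : 1 < p) (y : ℝ) : oddPow p y * y = |y| ^ (p + 1) := by
  have hsplit : |y| ^ (p + 1) = |y| ^ (p - 1) * |y| ^ (2 : ℝ) := by
    rw [← rpow_add_of_nonneg (abs_nonneg y) (by linarith) zero_le_two]
    congr 1
    ring
  rw [hsplit, rpow_two, sq_abs, oddPow]
  ring

theorem oddPow_sq (hp : 1 < p) (y : ℝ) : oddPow p y ^ 2 = |y| ^ (p - 1) * |y| ^ (p + 1) := by
  rw [← oddPow_mul_self hp, oddPow]
  ring

theorem hasDerivAt_abs_rpow_add_one (hp : 1 < p) (x : ℝ) :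
    HasDerivAt (fun y : ℝ => |y| ^ (p + 1)) ((p + 1) * oddPow p x) x := by
  refine (hasDerivAt_abs_rpow x (by linarith)).congr_deriv ?_
  rw [oddPow, show p + 1 - 2 = p - 1 by ring, mul_assoc]

theorem oddPow_mul_sub_le (hp : 1 < p) (a b : ℝ) :
    oddPow p a * (b - a) ≤ |b| ^ (p + 1) / (p + 1) - |a| ^ (p + 1) / (p + 1) := by
  have hconj : ((p + 1) / p).HolderConjugate (p + 1) := by
    refine Real.holderConjugate_iff.2 ⟨(one_lt_div (by linarith)).2 (by linarith), ?_⟩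
    field_simp
  have habs : |oddPow p a| = |a| ^ p := by
    rw [oddPow, abs_mul, abs_rpow_of_nonneg (abs_nonneg a), abs_abs,
      ← rpow_add_one' (abs_nonneg a) (by linarith), sub_add_cancel]
  have hyoung := Real.young_inequality (oddPow p a) b hconj
  rw [habs, ← rpow_mul (abs_nonneg a), mul_div_cancel₀ _ (by linarith : p ≠ 0)] at hyoung
  have hexp : |a| ^ (p + 1) / ((p + 1) / p) = |a| ^ (p + 1) - |a| ^ (p + 1) / (p + 1) := by
    field_simp
    ring
  linarith [oddPow_mul_self hp a, mul_sub (oddPow p a) b a]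

theorem abs_oddPow_sub_le (hp : 1 < p) {B a b : ℝ} (ha : |a| ≤ B) (hb : |b| ≤ B) :
    |oddPow p b - oddPow p a| ≤ p * B ^ (p - 1) * |b - a| := by
  refine (convex_Icc (-B) B).norm_image_sub_le_of_norm_hasDerivWithin_le
    (fun x _ => (hasDerivAt_oddPow hp x).hasDerivWithinAt) (fun x hx => ?_)
    (abs_le.1 ha) (abs_le.1 hb)
  have hxB : |x| ≤ B := abs_le.2 hx
  rw [norm_eq_abs, abs_of_nonneg (by positivity)]
  gcongr

end OddPower

local notation "∂ₓ" => SchwartzMap.derivCLM ℝ ℝ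

section Profile

variable {p : ℝ} {f g : 𝓢(ℝ, ℝ)}

/-- The energy density `½ (∂ₓ f)² + |f| ^ (p + 1) / (p + 1)` of a profile `f`. -/
noncomputable def energyDensity (p : ℝ) (f : 𝓢(ℝ, ℝ)) (x : ℝ) : ℝ :=
  (1 / 2) * (∂ₓ f x) ^ 2 + |f x| ^ (p + 1) / (p + 1)

/-- The negative `∂ₓ² f - |f| ^ (p - 1) f` of the `L²` gradient of the energy at `f`. -/
noncomputable def negEnergyGradient (p : ℝ) (f : 𝓢(ℝ, ℝ)) (x : ℝ) : ℝ :=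
  ∂ₓ (∂ₓ f) x - oddPow p (f x)

/-- The right-hand side of the equation `∂ₜ u = -∂ₓ³ u + ∂ₓ (|u| ^ (p - 1) u)`, as a function of the
profile `f = u t`. -/
noncomputable def timeDeriv (p : ℝ) (f : 𝓢(ℝ, ℝ)) (x : ℝ) : ℝ :=
  -∂ₓ (∂ₓ (∂ₓ f)) x + p * |f x| ^ (p - 1) * ∂ₓ f x

@[fun_prop]
theorem polyGrowth_abs_rpow {q : ℝ} (hq : 0 < q) (f : 𝓢(ℝ, ℝ)) :
    PolyGrowth fun x => |f x| ^ q := by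
  obtain ⟨C, -, hfC⟩ := (rapidDecay_schwartz f).decay 0
  simp only [pow_zero, one_mul] at hfC
  refine .of_bounded (C := C ^ q) (f.continuous.abs.rpow_const fun _ => Or.inr hq.le) fun x => ?_
  rw [abs_rpow_of_nonneg (abs_nonneg _), abs_abs]
  exact rpow_le_rpow (abs_nonneg _) (hfC x) hq.le

@[fun_prop]
theorem rapidDecay_oddPow (hp : 1 < p) (f : 𝓢(ℝ, ℝ)) : RapidDecay fun x => oddPow p (f x) :=
  .polyGrowth_mul (polyGrowth_abs_rpow (sub_pos.2 hp) f) (rapidDecay_schwartz f)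

@[fun_prop]
theorem rapidDecay_abs_rpow_add_one (hp : 1 < p) (f : 𝓢(ℝ, ℝ)) :
    RapidDecay fun x => |f x| ^ (p + 1) := by
  simp only [← oddPow_mul_self hp]
  fun_prop (disch := assumption)

@[fun_prop]
theorem rapidDecay_energyDensity (hp : 1 < p) (f : 𝓢(ℝ, ℝ)) :
    RapidDecay fun x => energyDensity p f x := by
  unfold energyDensity
  fun_prop (disch := assumption)

@[fun_prop]
theorem rapidDecay_negEnergyGradient (hp : 1 < p) (f : 𝓢(ℝ, ℝ)) :
    RapidDecay fun x => negEnergyGradient p f x := by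
  unfold negEnergyGradient
  fun_prop (disch := assumption)

@[fun_prop]
theorem rapidDecay_timeDeriv (hp : 1 < p) (f : 𝓢(ℝ, ℝ)) :
    RapidDecay fun x => timeDeriv p f x := by
  have := polyGrowth_abs_rpow (sub_pos.2 hp) f
  unfold timeDeriv
  fun_prop

theorem energyDensity_nonneg (hp : 1 < p) (f : 𝓢(ℝ, ℝ)) (x : ℝ) : 0 ≤ energyDensity p f x := by
  unfold energyDensity
  positivity

theorem hasDerivAt_schwartz (f : 𝓢(ℝ, ℝ)) (x : ℝ) : HasDerivAt f (∂ₓ f x) x :=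
  f.hasDerivAt x

theorem hasDerivAt_oddPow_schwartz (hp : 1 < p) (f : 𝓢(ℝ, ℝ)) (x : ℝ) :
    HasDerivAt (fun y => oddPow p (f y)) (p * |f x| ^ (p - 1) * ∂ₓ f x) x :=
  (hasDerivAt_oddPow hp (f x)).comp x (hasDerivAt_schwartz f x)

theorem hasDerivAt_negEnergyGradient (hp : 1 < p) (f : 𝓢(ℝ, ℝ)) (x : ℝ) :
    HasDerivAt (negEnergyGradient p f) (-timeDeriv p f x) x :=
  ((hasDerivAt_schwartz (∂ₓ (∂ₓ f)) x).fun_sub (hasDerivAt_oddPow_schwartz hp f x)).congr_deriv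
    (by rw [timeDeriv]; ring)

theorem integral_eq_of_hasDerivAt_sub {P F G : ℝ → ℝ} (hP : ∀ x, HasDerivAt P (F x - G x) x)
    (hPd : RapidDecay P) (hF : RapidDecay F) (hG : RapidDecay G) : ∫ x, F x = ∫ x, G x := by
  rw [← sub_eq_zero, ← integral_sub hF.integrable hG.integrable]
  exact integral_eq_zero_of_hasDerivAt_of_integrable hP (hF.sub hG).integrable hPd.integrable

theorem integral_timeDeriv_mul_schwartz (hp : 1 < p) (f K : 𝓢(ℝ, ℝ)) :
    ∫ x, timeDeriv p f x * K x
      = ∫ x, (f x * ∂ₓ (∂ₓ (∂ₓ K)) x - oddPow p (f x) * ∂ₓ K x) := by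
  refine integral_eq_of_hasDerivAt_sub
    (P := fun x => oddPow p (f x) * K x - ∂ₓ (∂ₓ f) x * K x + ∂ₓ f x * ∂ₓ K x
      - f x * ∂ₓ (∂ₓ K) x)
    (fun x => ?_) (by fun_prop (disch := assumption)) (by fun_prop (disch := assumption))
    (by fun_prop (disch := assumption))
  refine (((((hasDerivAt_oddPow_schwartz hp f x).fun_mul (hasDerivAt_schwartz K x)).fun_sub
    ((hasDerivAt_schwartz (∂ₓ (∂ₓ f)) x).fun_mul (hasDerivAt_schwartz K x))).fun_add
    ((hasDerivAt_schwartz (∂ₓ f) x).fun_mul (hasDerivAt_schwartz (∂ₓ K) x))).fun_sub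
    ((hasDerivAt_schwartz f x).fun_mul (hasDerivAt_schwartz (∂ₓ (∂ₓ K)) x))).congr_deriv ?_
  rw [timeDeriv]
  ring

theorem abs_integral_timeDeriv_mul_le {B : ℝ} (hp : 1 < p) (hfB : ∀ x, |f x| ≤ B)
    (K : 𝓢(ℝ, ℝ)) :
    |∫ x, timeDeriv p f x * K x|
      ≤ B * (∫ x, |∂ₓ (∂ₓ (∂ₓ K)) x|) + B ^ (p - 1) * B * ∫ x, |∂ₓ K x| := by
  rw [integral_timeDeriv_mul_schwartz hp, ← integral_const_mul, ← integral_const_mul,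
    ← integral_add (RapidDecay.integrable (by fun_prop)) (RapidDecay.integrable (by fun_prop))]
  refine abs_integral_le_integral_abs.trans (integral_mono
    (RapidDecay.integrable (by fun_prop (disch := assumption)))
    (RapidDecay.integrable (by fun_prop)) fun x => ?_)
  have hB : 0 ≤ B := (abs_nonneg _).trans (hfB 0)
  calc |f x * ∂ₓ (∂ₓ (∂ₓ K)) x - oddPow p (f x) * ∂ₓ K x|
      ≤ |f x| * |∂ₓ (∂ₓ (∂ₓ K)) x| + |oddPow p (f x)| * |∂ₓ K x| := by
        rw [← abs_mul, ← abs_mul]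
        exact abs_sub _ _
    _ = |f x| * |∂ₓ (∂ₓ (∂ₓ K)) x| + |f x| ^ (p - 1) * |f x| * |∂ₓ K x| := by
        rw [oddPow, abs_mul, abs_of_nonneg (rpow_nonneg (abs_nonneg (f x)) _)]
    _ ≤ B * |∂ₓ (∂ₓ (∂ₓ K)) x| + B ^ (p - 1) * B * |∂ₓ K x| := by
        gcongr <;> exact hfB x

theorem abs_integral_timeDeriv_sub_integral_timeDeriv_le {B : ℝ} (hp : 1 < p)
    (hfB : ∀ x, |f x| ≤ B) (hgB : ∀ x, |g x| ≤ B) (K : 𝓢(ℝ, ℝ)) :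
    |(∫ x, timeDeriv p f x * K x) - ∫ x, timeDeriv p g x * K x|
      ≤ (√(∫ x, ∂ₓ (∂ₓ (∂ₓ K)) x ^ 2) + p * B ^ (p - 1) * √(∫ x, ∂ₓ K x ^ 2))
        * √(∫ x, (f x - g x) ^ 2) := by
  have hholder : ∀ G : 𝓢(ℝ, ℝ),
      ∫ x, |(f x - g x) * G x| ≤ √(∫ x, (f x - g x) ^ 2) * √(∫ x, G x ^ 2) := fun G =>
    integral_abs_mul_le_sqrt_mul_sqrt (RapidDecay.memLp_two (by fun_prop))
      (RapidDecay.memLp_two (by fun_prop))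
  rw [integral_timeDeriv_mul_schwartz hp, integral_timeDeriv_mul_schwartz hp,
    ← integral_sub (RapidDecay.integrable (by fun_prop (disch := assumption)))
      (RapidDecay.integrable (by fun_prop (disch := assumption)))]
  have hB : 0 ≤ B := (abs_nonneg _).trans (hfB 0)
  calc |∫ x, ((f x * ∂ₓ (∂ₓ (∂ₓ K)) x - oddPow p (f x) * ∂ₓ K x)
        - (g x * ∂ₓ (∂ₓ (∂ₓ K)) x - oddPow p (g x) * ∂ₓ K x))|
      ≤ ∫ x, (|(f x - g x) * ∂ₓ (∂ₓ (∂ₓ K)) x| + p * B ^ (p - 1) * |(f x - g x) * ∂ₓ K x|) := by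
        refine abs_integral_le_integral_abs.trans (integral_mono
          (RapidDecay.integrable (by fun_prop (disch := assumption)))
          (RapidDecay.integrable (by fun_prop)) fun x => ?_)
        calc |(f x * ∂ₓ (∂ₓ (∂ₓ K)) x - oddPow p (f x) * ∂ₓ K x)
              - (g x * ∂ₓ (∂ₓ (∂ₓ K)) x - oddPow p (g x) * ∂ₓ K x)|
            = |(f x - g x) * ∂ₓ (∂ₓ (∂ₓ K)) x
                - (oddPow p (f x) - oddPow p (g x)) * ∂ₓ K x| := by ring_nf
          _ ≤ |(f x - g x) * ∂ₓ (∂ₓ (∂ₓ K)) x|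
                + |oddPow p (f x) - oddPow p (g x)| * |∂ₓ K x| := by
              rw [← abs_mul]
              exact abs_sub _ _
          _ ≤ |(f x - g x) * ∂ₓ (∂ₓ (∂ₓ K)) x| + p * B ^ (p - 1) * |(f x - g x) * ∂ₓ K x| := by
              rw [abs_mul (f x - g x) (∂ₓ K x), ← mul_assoc]
              gcongr
              exact abs_oddPow_sub_le hp (hgB x) (hfB x)
    _ = (∫ x, |(f x - g x) * ∂ₓ (∂ₓ (∂ₓ K)) x|)
          + p * B ^ (p - 1) * ∫ x, |(f x - g x) * ∂ₓ K x| := by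
        rw [integral_add (RapidDecay.integrable (by fun_prop))
          (RapidDecay.integrable (by fun_prop)), integral_const_mul]
    _ ≤ _ := by
        grw [hholder, hholder]
        exact le_of_eq (by ring)

theorem integral_timeDeriv_mul_weighted_self {φ φ₁ φ₂ φ₃ : ℝ → ℝ} (hp : 1 < p) (f : 𝓢(ℝ, ℝ))
    (hφ : ∀ x, HasDerivAt φ (φ₁ x) x) (hφ₁ : ∀ x, HasDerivAt φ₁ (φ₂ x) x)
    (hφ₂ : ∀ x, HasDerivAt φ₂ (φ₃ x) x) (hg : PolyGrowth φ) (hg₁ : PolyGrowth φ₁)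
    (hg₂ : PolyGrowth φ₂) (hg₃ : PolyGrowth φ₃) :
    ∫ x, timeDeriv p f x * (2 * φ x * f x) = ∫ x, (φ₃ x * f x ^ 2
      - φ₁ x * (3 * ∂ₓ f x ^ 2 + 2 * p / (p + 1) * |f x| ^ (p + 1))) := by
  refine integral_eq_of_hasDerivAt_sub
    (P := fun x => φ x * (∂ₓ f x ^ 2 - 2 * f x * ∂ₓ (∂ₓ f) x + 2 * p / (p + 1) * |f x| ^ (p + 1))
      + 2 * φ₁ x * (f x * ∂ₓ f x) - φ₂ x * f x ^ 2)
    (fun x => ?_) (by fun_prop (disch := assumption)) (by fun_prop (disch := assumption))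
    (by fun_prop (disch := assumption))
  have h₀ := hasDerivAt_schwartz f x
  have h₁ := hasDerivAt_schwartz (∂ₓ f) x
  have h₂ := hasDerivAt_schwartz (∂ₓ (∂ₓ f)) x
  have hpow : HasDerivAt (fun y => |f y| ^ (p + 1)) ((p + 1) * oddPow p (f x) * ∂ₓ f x) x :=
    (hasDerivAt_abs_rpow_add_one hp (f x)).comp x h₀
  refine ((((hφ x).fun_mul (((h₁.fun_pow 2).fun_sub ((h₀.const_mul 2).fun_mul h₂)).fun_add
    (hpow.const_mul _))).fun_add (((hφ₁ x).const_mul 2).fun_mul (h₀.fun_mul h₁))).fun_sub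
    ((hφ₂ x).fun_mul (h₀.fun_pow 2))).congr_deriv ?_
  have hp' : p + 1 ≠ 0 := by linarith
  rw [timeDeriv, oddPow]
  field_simp
  ring

theorem integral_timeDeriv_mul_self (hp : 1 < p) (f : 𝓢(ℝ, ℝ)) :
    ∫ x, timeDeriv p f x * f x = 0 := by
  have h := integral_timeDeriv_mul_weighted_self hp f (φ := fun _ => 1 / 2)
    (fun _ => hasDerivAt_const _ _) (fun _ => hasDerivAt_const _ _) (fun _ => hasDerivAt_const _ _)
    (.const _) (.const _) (.const _) (.const _)
  simpa using h

theorem integral_energy_first_variation {ψ ψ₁ : ℝ → ℝ} (hp : 1 < p) (f g : 𝓢(ℝ, ℝ))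
    (hψ : ∀ x, HasDerivAt ψ (ψ₁ x) x) (hg : PolyGrowth ψ) (hg₁ : PolyGrowth ψ₁) :
    ∫ x, ψ x * (∂ₓ f x * (∂ₓ g x - ∂ₓ f x) + oddPow p (f x) * (g x - f x))
      = ∫ x, -((g x - f x) * (ψ₁ x * ∂ₓ f x + ψ x * negEnergyGradient p f x)) := by
  refine integral_eq_of_hasDerivAt_sub (P := fun x => ψ x * (∂ₓ f x * (g x - f x)))
    (fun x => ?_) (by fun_prop (disch := assumption)) (by fun_prop (disch := assumption))
    (by fun_prop (disch := assumption))
  refine ((hψ x).fun_mul ((hasDerivAt_schwartz (∂ₓ f) x).fun_mul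
    ((hasDerivAt_schwartz g x).fun_sub (hasDerivAt_schwartz f x)))).congr_deriv ?_
  rw [negEnergyGradient]
  ring

/-- The remainder of the first-order expansion of the energy density at `f`, evaluated at `g`. -/
noncomputable def energyRemainder (p : ℝ) (f g : 𝓢(ℝ, ℝ)) (x : ℝ) : ℝ :=
  energyDensity p g x - energyDensity p f x
    - (∂ₓ f x * (∂ₓ g x - ∂ₓ f x) + oddPow p (f x) * (g x - f x))

@[fun_prop]
theorem rapidDecay_energyRemainder (hp : 1 < p) (f g : 𝓢(ℝ, ℝ)) :
    RapidDecay fun x => energyRemainder p f g x := by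
  unfold energyRemainder
  fun_prop (disch := assumption)

theorem energyRemainder_nonneg (hp : 1 < p) (f g : 𝓢(ℝ, ℝ)) (x : ℝ) :
    0 ≤ energyRemainder p f g x := by
  simp only [energyRemainder, energyDensity]
  linarith [oddPow_mul_sub_le hp (f x) (g x), sq_nonneg (∂ₓ g x - ∂ₓ f x)]

theorem integral_mul_energyRemainder {ψ ψ₁ : ℝ → ℝ} (hp : 1 < p) (f g : 𝓢(ℝ, ℝ))
    (hψ : ∀ x, HasDerivAt ψ (ψ₁ x) x) (hg : PolyGrowth ψ) (hg₁ : PolyGrowth ψ₁) :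
    ∫ x, ψ x * energyRemainder p f g x
      = (∫ x, ψ x * energyDensity p g x) - (∫ x, ψ x * energyDensity p f x)
        + ((∫ x, g x * (ψ₁ x * ∂ₓ f x + ψ x * negEnergyGradient p f x))
          - ∫ x, f x * (ψ₁ x * ∂ₓ f x + ψ x * negEnergyGradient p f x)) := by
  simp only [energyRemainder, mul_sub (ψ _) (_ - _)]
  rw [integral_sub (RapidDecay.integrable (by fun_prop (disch := assumption)))
      (RapidDecay.integrable (by fun_prop (disch := assumption))),
    integral_energy_first_variation hp f g hψ hg hg₁, integral_neg, sub_neg_eq_add]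
  simp only [sub_mul (g _), mul_sub (ψ _)]
  rw [integral_sub (RapidDecay.integrable (by fun_prop (disch := assumption)))
      (RapidDecay.integrable (by fun_prop (disch := assumption))),
    integral_sub (RapidDecay.integrable (by fun_prop (disch := assumption)))
      (RapidDecay.integrable (by fun_prop (disch := assumption)))]

theorem integral_timeDeriv_energyFlux {ψ ψ₁ ψ₂ : ℝ → ℝ} (hp : 1 < p) (f : 𝓢(ℝ, ℝ))
    (hψ : ∀ x, HasDerivAt ψ (ψ₁ x) x) (hψ₁ : ∀ x, HasDerivAt ψ₁ (ψ₂ x) x)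
    (hg : PolyGrowth ψ) (hg₁ : PolyGrowth ψ₁) (hg₂ : PolyGrowth ψ₂) :
    ∫ x, -(timeDeriv p f x * (ψ₁ x * ∂ₓ f x + ψ x * negEnergyGradient p f x))
      = ∫ x, -(ψ₁ x * (3 / 2 * negEnergyGradient p f x ^ 2
            + negEnergyGradient p f x * oddPow p (f x))
          + ψ₂ x * (negEnergyGradient p f x * ∂ₓ f x)) := by
  refine integral_eq_of_hasDerivAt_sub
    (P := fun x => ψ x * (negEnergyGradient p f x ^ 2 / 2)
      + ψ₁ x * (negEnergyGradient p f x * ∂ₓ f x))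
    (fun x => ?_) (by fun_prop (disch := assumption)) (by fun_prop (disch := assumption))
    (by fun_prop (disch := assumption))
  have hh := hasDerivAt_negEnergyGradient hp f x
  refine (((hψ x).fun_mul ((hh.fun_pow 2).div_const 2)).fun_add
    ((hψ₁ x).fun_mul (hh.fun_mul (hasDerivAt_schwartz (∂ₓ f) x)))).congr_deriv ?_
  have hf₂ : ∂ₓ (∂ₓ f) x = negEnergyGradient p f x + oddPow p (f x) := by
    rw [negEnergyGradient, sub_add_cancel]
  rw [hf₂]
  ring

theorem integral_timeDeriv_mul_negEnergyGradient (hp : 1 < p) (f : 𝓢(ℝ, ℝ)) :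
    ∫ x, timeDeriv p f x * negEnergyGradient p f x = 0 := by
  have h := integral_timeDeriv_energyFlux hp f (ψ := fun _ => 1)
    (fun _ => hasDerivAt_const _ _) (fun _ => hasDerivAt_const _ _) (.const _) (.const _) (.const _)
  simpa [integral_neg] using h

/-- The good term `-3/2 a h²` of the energy flux absorbs the terms linear in `h`. -/
theorem neg_energyFlux_le {a b : ℝ} (ha : 0 ≤ a) (hb : |b| ≤ 3 * a) (h N d : ℝ) :
    -(a * (3 / 2 * h ^ 2 + h * N) + b * (h * d)) ≤ a * (9 / 2 * d ^ 2 + N ^ 2 / 2) := by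
  have hhN : -(h * N) ≤ h ^ 2 / 2 + N ^ 2 / 2 := by linarith [sq_nonneg (h + N)]
  have hhd : 3 * |h * d| ≤ h ^ 2 / 2 + 9 / 2 * d ^ 2 := by
    rw [abs_mul]
    linarith [sq_nonneg (|h| - 3 * |d|), sq_abs h, sq_abs d]
  have hbhd : -(b * (h * d)) ≤ 3 * a * |h * d| :=
    calc -(b * (h * d)) ≤ |b| * |h * d| := (neg_le_abs _).trans_eq (abs_mul _ _)
      _ ≤ 3 * a * |h * d| := by gcongr
  calc -(a * (3 / 2 * h ^ 2 + h * N) + b * (h * d))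
      = a * (-(3 / 2 * h ^ 2) + -(h * N)) + -(b * (h * d)) := by ring
    _ ≤ a * (-(3 / 2 * h ^ 2) + -(h * N)) + 3 * a * |h * d| := by gcongr
    _ = a * (-(3 / 2 * h ^ 2) + -(h * N) + 3 * |h * d|) := by ring
    _ ≤ a * (9 / 2 * d ^ 2 + N ^ 2 / 2) := by
        refine mul_le_mul_of_nonneg_left ?_ ha
        linarith [sq_nonneg h]

theorem deriv_sq_add_oddPow_sq_le {B : ℝ} (hp : 1 < p) {x : ℝ} (hfB : |f x| ≤ B) :
    9 / 2 * ∂ₓ f x ^ 2 + oddPow p (f x) ^ 2 / 2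
      ≤ (9 + (p + 1) * B ^ (p - 1) / 2) * energyDensity p f x := by
  have hB : 0 ≤ B ^ (p - 1) := rpow_nonneg ((abs_nonneg _).trans hfB) _
  have hNsq : oddPow p (f x) ^ 2 ≤ B ^ (p - 1) * ((p + 1) * (|f x| ^ (p + 1) / (p + 1))) := by
    rw [oddPow_sq hp, mul_div_cancel₀ _ (by linarith : p + 1 ≠ 0)]
    gcongr
  have hpot : 0 ≤ |f x| ^ (p + 1) / (p + 1) := by positivity
  have hkin : 0 ≤ (p + 1) * B ^ (p - 1) * ∂ₓ f x ^ 2 := by positivity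
  unfold energyDensity
  linarith

theorem integral_timeDeriv_energyFlux_le {ψ ψ₁ ψ₂ : ℝ → ℝ} {B : ℝ} (hp : 1 < p)
    (hfB : ∀ x, |f x| ≤ B) (hψ : ∀ x, HasDerivAt ψ (ψ₁ x) x)
    (hψ₁ : ∀ x, HasDerivAt ψ₁ (ψ₂ x) x) (hg : PolyGrowth ψ) (hg₁ : PolyGrowth ψ₁)
    (hg₂ : PolyGrowth ψ₂) (hpos : ∀ x, 0 ≤ ψ₁ x) (hle : ∀ x, ψ₁ x ≤ 2 * ψ x)
    (hle₂ : ∀ x, |ψ₂ x| ≤ 3 * ψ₁ x) :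
    ∫ x, -(timeDeriv p f x * (ψ₁ x * ∂ₓ f x + ψ x * negEnergyGradient p f x))
      ≤ (18 + (p + 1) * B ^ (p - 1)) * ∫ x, ψ x * energyDensity p f x := by
  rw [integral_timeDeriv_energyFlux hp f hψ hψ₁ hg hg₁ hg₂, ← integral_const_mul]
  refine integral_mono (RapidDecay.integrable (by fun_prop (disch := assumption)))
    (RapidDecay.integrable (by fun_prop (disch := assumption))) fun x => ?_
  have hB : 0 ≤ B ^ (p - 1) := rpow_nonneg ((abs_nonneg _).trans (hfB x)) _
  have he := energyDensity_nonneg hp f x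
  refine (neg_energyFlux_le (hpos x) (hle₂ x) _ _ _).trans ?_
  calc ψ₁ x * (9 / 2 * ∂ₓ f x ^ 2 + oddPow p (f x) ^ 2 / 2)
      ≤ ψ₁ x * ((9 + (p + 1) * B ^ (p - 1) / 2) * energyDensity p f x) :=
        mul_le_mul_of_nonneg_left (deriv_sq_add_oddPow_sq_le hp (hfB x)) (hpos x)
    _ ≤ 2 * ψ x * ((9 + (p + 1) * B ^ (p - 1) / 2) * energyDensity p f x) := by
        gcongr
        exact hle x
    _ = (18 + (p + 1) * B ^ (p - 1)) * (ψ x * energyDensity p f x) := by ring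

theorem sq_le_integral_sq_add_integral_deriv_sq (f : 𝓢(ℝ, ℝ)) (x : ℝ) :
    f x ^ 2 ≤ (∫ y, f y ^ 2) + ∫ y, ∂ₓ f y ^ 2 := by
  have hint : Integrable fun y => f y ^ 2 + ∂ₓ f y ^ 2 := RapidDecay.integrable (by fun_prop)
  have hlim : Tendsto (fun y => f y ^ 2) atBot (𝓝 0) := by
    simpa using (f.tendsto_cocompact.mono_left atBot_le_cocompact).pow 2
  have hderiv : ∀ y, HasDerivAt (fun y => f y ^ 2) (2 * (f y * ∂ₓ f y)) y := fun y =>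
    ((hasDerivAt_schwartz f y).fun_pow 2).congr_deriv (by push_cast; ring)
  have hint' : Integrable fun y => 2 * (f y * ∂ₓ f y) := RapidDecay.integrable (by fun_prop)
  calc f x ^ 2 = ∫ y in Set.Iic x, 2 * (f y * ∂ₓ f y) := by
        rw [integral_Iic_of_hasDerivAt_of_tendsto' (fun y _ => hderiv y) hint'.integrableOn hlim,
          sub_zero]
    _ ≤ ∫ y in Set.Iic x, (f y ^ 2 + ∂ₓ f y ^ 2) :=
        setIntegral_mono hint'.integrableOn hint.integrableOn fun y => by
          linarith [sq_nonneg (f y - ∂ₓ f y)]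
    _ ≤ ∫ y, (f y ^ 2 + ∂ₓ f y ^ 2) :=
        setIntegral_le_integral hint (ae_of_all _ fun y => by positivity)
    _ = (∫ y, f y ^ 2) + ∫ y, ∂ₓ f y ^ 2 :=
        integral_add (RapidDecay.integrable (by fun_prop)) (RapidDecay.integrable (by fun_prop))

end Profile

section Cutoff

/-- The localization `x ↦ χ (c * x) * K x` of `K`, at scale `1 / c`. -/
noncomputable def cutoffMul (χ : 𝓢(ℝ, ℝ)) (c : ℝ) (K : 𝓢(ℝ, ℝ)) : 𝓢(ℝ, ℝ) :=
  SchwartzMap.smulLeftCLM ℝ (fun x => χ (c * x)) K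

theorem cutoffMul_apply (χ : 𝓢(ℝ, ℝ)) (c : ℝ) (K : 𝓢(ℝ, ℝ)) (x : ℝ) :
    cutoffMul χ c K x = χ (c * x) * K x := by
  have hscale : (fun x : ℝ => χ (c * x)).HasTemperateGrowth :=
    χ.hasTemperateGrowth.comp (by fun_prop)
  rw [cutoffMul, SchwartzMap.smulLeftCLM_apply_apply hscale, smul_eq_mul]

theorem deriv_cutoffMul (χ : 𝓢(ℝ, ℝ)) (c : ℝ) (K : 𝓢(ℝ, ℝ)) :
    ∂ₓ (cutoffMul χ c K) = c • cutoffMul (∂ₓ χ) c K + cutoffMul χ c (∂ₓ K) := by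
  ext x
  have hχ : HasDerivAt (fun y => χ (c * y)) (∂ₓ χ (c * x) * c) x :=
    (hasDerivAt_schwartz χ (c * x)).comp x (hasDerivAt_const_mul c)
  have hprod : HasDerivAt (cutoffMul χ c K) (∂ₓ χ (c * x) * c * K x + χ (c * x) * ∂ₓ K x) x := by
    simpa only [funext (cutoffMul_apply χ c K)] using hχ.fun_mul (hasDerivAt_schwartz K x)
  simp only [add_apply, smul_apply, cutoffMul_apply, smul_eq_mul,
    (hasDerivAt_schwartz _ x).unique hprod]
  ring

theorem tendsto_integral_abs_cutoffMul_sub (χ K : 𝓢(ℝ, ℝ)) :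
    Tendsto (fun c => ∫ x, |cutoffMul χ c K x - χ 0 * K x|) (𝓝 0) (𝓝 0) := by
  obtain ⟨C, -, hC⟩ := (rapidDecay_schwartz χ).decay 0
  simp only [pow_zero, one_mul] at hC
  have hlim : Tendsto (fun c => ∫ x, |cutoffMul χ c K x - χ 0 * K x|) (𝓝 0)
      (𝓝 (∫ _ : ℝ, (0 : ℝ))) := by
    refine tendsto_integral_filter_of_dominated_convergence (fun x => 2 * C * |K x|)
      (Eventually.of_forall fun c => (Continuous.aestronglyMeasurable (by fun_prop)))
      (Eventually.of_forall fun c => ae_of_all _ fun x => ?_)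
      (RapidDecay.integrable (by fun_prop)) (ae_of_all _ fun x => ?_)
    · rw [cutoffMul_apply, ← sub_mul, norm_eq_abs, abs_abs, abs_mul]
      gcongr
      linarith [abs_sub (χ (c * x)) (χ 0), hC (c * x), hC 0]
    · simp only [cutoffMul_apply]
      refine Continuous.tendsto' ?_ 0 0 (by simp)
      fun_prop
  simpa using hlim

theorem tendsto_integral_abs_iterate_deriv_cutoffMul_sub (n : ℕ) (χ K : 𝓢(ℝ, ℝ)) :
    Tendsto (fun c => ∫ x, |∂ₓ^[n] (cutoffMul χ c K) x - χ 0 * ∂ₓ^[n] K x|) (𝓝 0) (𝓝 0) := by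
  induction n generalizing χ K with
  | zero => exact tendsto_integral_abs_cutoffMul_sub χ K
  | succ n ih =>
    obtain ⟨κ, hκ⟩ : ∃ κ, ∂ₓ χ 0 = κ := ⟨_, rfl⟩
    have ih₁ := ih (∂ₓ χ) K
    rw [hκ] at ih₁
    have hmajorant : Tendsto (fun c => |c| * ((∫ x, |∂ₓ^[n] (cutoffMul (∂ₓ χ) c K) x
          - κ * ∂ₓ^[n] K x|) + ∫ x, |κ * ∂ₓ^[n] K x|)
        + ∫ x, |∂ₓ^[n] (cutoffMul χ c (∂ₓ K)) x - χ 0 * ∂ₓ^[n] (∂ₓ K) x|) (𝓝 0) (𝓝 0) := by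
      simpa using ((continuous_abs.tendsto' (0 : ℝ) 0 abs_zero).mul
        (ih₁.add_const (∫ x, |κ * ∂ₓ^[n] K x|))).add (ih χ (∂ₓ K))
    refine squeeze_zero (fun c => integral_nonneg fun x => abs_nonneg _) (fun c => ?_) hmajorant
    rw [← integral_add (RapidDecay.integrable (by fun_prop)) (RapidDecay.integrable (by fun_prop)),
      ← integral_const_mul,
      ← integral_add (RapidDecay.integrable (by fun_prop)) (RapidDecay.integrable (by fun_prop))]
    refine integral_mono (RapidDecay.integrable (by fun_prop))
      (RapidDecay.integrable (by fun_prop)) fun x => ?_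
    have hsmul : Function.Commute ∂ₓ (fun F : 𝓢(ℝ, ℝ) => c • F) := map_smul ∂ₓ c
    have hsplit : ∂ₓ^[n + 1] (cutoffMul χ c K)
        = c • ∂ₓ^[n] (cutoffMul (∂ₓ χ) c K) + ∂ₓ^[n] (cutoffMul χ c (∂ₓ K)) := by
      rw [Function.iterate_succ_apply, deriv_cutoffMul, iterate_map_add,
        (hsmul.iterate_left n).eq]
    simp only [hsplit, add_apply, smul_apply, smul_eq_mul,
      Function.iterate_succ_apply]
    set a := ∂ₓ^[n] (cutoffMul (∂ₓ χ) c K) x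
    set b := ∂ₓ^[n] (cutoffMul χ c (∂ₓ K)) x
    calc |c * a + b - χ 0 * ∂ₓ^[n] (∂ₓ K) x|
        = |c * ((a - κ * ∂ₓ^[n] K x) + κ * ∂ₓ^[n] K x) + (b - χ 0 * ∂ₓ^[n] (∂ₓ K) x)| := by ring_nf
      _ ≤ |c| * (|a - κ * ∂ₓ^[n] K x| + |κ * ∂ₓ^[n] K x|) + |b - χ 0 * ∂ₓ^[n] (∂ₓ K) x| := by
        refine (abs_add_le _ _).trans ?_
        rw [abs_mul]
        gcongr
        exact abs_add_le _ _

theorem exists_hasCompactSupport_tendsto_integral_abs_iterate_deriv_sub (K : 𝓢(ℝ, ℝ)) :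
    ∃ G : ℕ → 𝓢(ℝ, ℝ), (∀ k, HasCompactSupport (G k)) ∧
      ∀ n, Tendsto (fun k => ∫ x, |∂ₓ^[n] (G k) x - ∂ₓ^[n] K x|) atTop (𝓝 0) := by
  let bump : ContDiffBump (0 : ℝ) := ⟨1, 2, by norm_num, by norm_num⟩
  let χ : 𝓢(ℝ, ℝ) := bump.hasCompactSupport.toSchwartzMap bump.contDiff
  have hχ : χ 0 = 1 := bump.one_of_mem_closedBall (by simp [bump])
  refine ⟨fun k => cutoffMul χ (1 / (k + 1 : ℝ)) K, fun k => ?_, fun n => ?_⟩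
  · have hscale : HasCompactSupport fun x : ℝ => χ (1 / (k + 1 : ℝ) * x) :=
      bump.hasCompactSupport.comp_homeomorph (Homeomorph.mulLeft₀ _ (by positivity))
    rw [funext (cutoffMul_apply χ _ K)]
    exact hscale.mul_right
  · simpa [hχ, Function.comp_def] using
      (tendsto_integral_abs_iterate_deriv_cutoffMul_sub n χ K).comp
        tendsto_one_div_add_atTop_nhds_zero_nat

end Cutoff

/-- `u` is a global Schwartz solution of `∂ₜ u + ∂ₓ³ u = ∂ₓ (|u| ^ (p - 1) u)`, of mass `M` and
energy `E`. Conservation of mass and energy is part of the notion. Only the joint regularity in time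
and space is required: seminorms of `u t` need not depend continuously on `t`. -/
structure IsGKdVSolution (p M E : ℝ) (u : ℝ → 𝓢(ℝ, ℝ)) : Prop where
  one_lt : 1 < p
  contDiff : ContDiff ℝ 1 fun q : ℝ × ℝ => u q.1 q.2
  hasDerivAt : ∀ t x, HasDerivAt (fun s => u s x) (timeDeriv p (u t) x) t
  mass_eq : ∀ t, ∫ x, u t x ^ 2 = M
  energy_eq : ∀ t, ∫ x, energyDensity p (u t) x = E

namespace IsGKdVSolution

variable {p M E : ℝ} {u : ℝ → 𝓢(ℝ, ℝ)}

theorem continuous_timeDeriv (hu : IsGKdVSolution p M E u) :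
    Continuous (Function.uncurry fun t x => timeDeriv p (u t) x) := by
  have hfderiv : (Function.uncurry fun t x => timeDeriv p (u t) x)
      = fun q => fderiv ℝ (fun q : ℝ × ℝ => u q.1 q.2) q (1, 0) := by
    funext ⟨t, x⟩
    have hline : HasDerivAt (fun s : ℝ => (s, x)) (1, 0) t :=
      (hasDerivAt_id' t).prodMk (hasDerivAt_const t x)
    have hdiff := (hu.contDiff.differentiable one_ne_zero (t, x)).hasFDerivAt
    have hchain := hdiff.comp_hasDerivAt t hline
    exact (hu.hasDerivAt t x).unique hchain
  rw [hfderiv]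
  exact (hu.contDiff.continuous_fderiv one_ne_zero).clm_apply continuous_const

theorem abs_le_sqrt (hu : IsGKdVSolution p M E u) (t x : ℝ) : |u t x| ≤ √(M + 2 * E) := by
  have hp := hu.one_lt
  refine Real.abs_le_sqrt ((sq_le_integral_sq_add_integral_deriv_sq (u t) x).trans ?_)
  rw [← hu.mass_eq t, ← hu.energy_eq t, ← integral_const_mul]
  refine add_le_add le_rfl (integral_mono (RapidDecay.integrable (by fun_prop))
    (RapidDecay.integrable (by fun_prop (disch := assumption))) fun y => ?_)
  have : 0 ≤ |u t y| ^ (p + 1) / (p + 1) := by positivity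
  simp only [energyDensity]
  linarith

theorem hasDerivAt_integral_mul_schwartz (hu : IsGKdVSolution p M E u) (K : 𝓢(ℝ, ℝ)) (t : ℝ) :
    HasDerivAt (fun s => ∫ x, u s x * K x) (∫ x, timeDeriv p (u t) x * K x) t := by
  have hp := hu.one_lt
  set B := √(M + 2 * E)
  obtain ⟨G, hGs, hG⟩ := exists_hasCompactSupport_tendsto_integral_abs_iterate_deriv_sub K
  have hderiv : ∀ k s, HasDerivAt (fun s => ∫ x, u s x * G k x)
      (∫ x, timeDeriv p (u s) x * G k x) s := fun k s =>
    hasDerivAt_integral_mul_of_hasCompactSupport (fun s => (u s).continuous)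
      hu.continuous_timeDeriv hu.hasDerivAt (G k).continuous (hGs k) s
  have hunif : TendstoUniformly (fun k s => ∫ x, timeDeriv p (u s) x * G k x)
      (fun s => ∫ x, timeDeriv p (u s) x * K x) atTop := by
    have hbound : Tendsto (fun k => B * (∫ x, |∂ₓ (∂ₓ (∂ₓ (G k))) x - ∂ₓ (∂ₓ (∂ₓ K)) x|)
        + B ^ (p - 1) * B * ∫ x, |∂ₓ (G k) x - ∂ₓ K x|) atTop (𝓝 0) := by
      simpa using ((hG 3).const_mul B).add ((hG 1).const_mul (B ^ (p - 1) * B))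
    refine Metric.tendstoUniformly_iff.2 fun ε hε => ?_
    filter_upwards [hbound.eventually_lt_const hε] with k hk s
    rw [dist_comm, Real.dist_eq, ← integral_sub
      (RapidDecay.integrable (by fun_prop (disch := assumption)))
      (RapidDecay.integrable (by fun_prop (disch := assumption)))]
    have hdiff := abs_integral_timeDeriv_mul_le hp (hu.abs_le_sqrt s) (G k - K)
    simp only [map_sub, sub_apply, mul_sub] at hdiff
    exact hdiff.trans_lt hk
  have hlim : ∀ s, Tendsto (fun k => ∫ x, u s x * G k x) atTop (𝓝 (∫ x, u s x * K x)) := fun s => by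
    rw [tendsto_iff_dist_tendsto_zero]
    refine squeeze_zero (fun k => dist_nonneg) (fun k => ?_) (by simpa using (hG 0).const_mul B)
    rw [Real.dist_eq, ← integral_sub (RapidDecay.integrable (by fun_prop))
      (RapidDecay.integrable (by fun_prop)), ← integral_const_mul]
    refine abs_integral_le_integral_abs.trans (integral_mono
      (RapidDecay.integrable (by fun_prop)) (RapidDecay.integrable (by fun_prop)) fun x => ?_)
    simp only [← mul_sub, abs_mul]
    gcongr
    exact hu.abs_le_sqrt s x
  exact hasDerivAt_of_tendstoUniformly hunif (Eventually.of_forall hderiv) hlim t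

theorem integral_sub_sq (hu : IsGKdVSolution p M E u) (s t : ℝ) :
    ∫ x, (u s x - u t x) ^ 2 = 2 * M - 2 * ∫ x, u s x * u t x := by
  have hexpand : ∀ x, (u s x - u t x) ^ 2 = u s x ^ 2 + u t x ^ 2 - 2 * (u s x * u t x) :=
    fun x => by ring
  simp only [hexpand]
  rw [integral_sub (RapidDecay.integrable (by fun_prop)) (RapidDecay.integrable (by fun_prop)),
    integral_add (RapidDecay.integrable (by fun_prop)) (RapidDecay.integrable (by fun_prop)),
    integral_const_mul, hu.mass_eq, hu.mass_eq]
  ring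

theorem exists_sqrt_integral_sub_sq_le (hu : IsGKdVSolution p M E u) (t : ℝ) :
    ∃ C, 0 ≤ C ∧ ∀ s, √(∫ x, (u s x - u t x) ^ 2) ≤ C * |s - t| := by
  have hp := hu.one_lt
  refine ⟨_, ?_, sqrt_le_of_abs_deriv_le_sqrt
    (w' := fun s => -(2 * ∫ x, timeDeriv p (u s) x * u t x))
    (C := √(∫ x, ∂ₓ (∂ₓ (∂ₓ (u t))) x ^ 2)
      + p * √(M + 2 * E) ^ (p - 1) * √(∫ x, ∂ₓ (u t) x ^ 2)) (by positivity)
    (fun s => ?_) (fun s => integral_nonneg fun x => sq_nonneg _) (by simp) fun s => ?_⟩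
  · positivity
  · simp only [hu.integral_sub_sq _ t]
    exact ((hu.hasDerivAt_integral_mul_schwartz (u t) s).const_mul 2).const_sub _
  · have hdiff := abs_integral_timeDeriv_sub_integral_timeDeriv_le hp (hu.abs_le_sqrt s)
      (hu.abs_le_sqrt t) (u t)
    rw [integral_timeDeriv_mul_self hp, sub_zero] at hdiff
    rw [abs_neg, abs_mul, abs_two, mul_assoc]
    gcongr

/-- Lipschitz continuity of `t ↦ u t` in `L²` makes it enough to test against a dense class. -/
theorem hasDerivAt_integral_mul (hu : IsGKdVSolution p M E u) {K : ℝ → ℝ} (hK : MemLp K 2) (t : ℝ) :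
    HasDerivAt (fun s => ∫ x, u s x * K x) (∫ x, timeDeriv p (u t) x * K x) t := by
  have hp := hu.one_lt
  obtain ⟨C, hC, hlip⟩ := hu.exists_sqrt_integral_sub_sq_le t
  set D := √(∫ x, timeDeriv p (u t) x ^ 2)
  have hD : 0 ≤ D := sqrt_nonneg _
  refine hasDerivAt_of_approx fun ε hε => ?_
  obtain ⟨G, hGs, hG, hG2, hKG⟩ := exists_hasCompactSupport_sqrt_integral_sub_sq_le hK
    (by positivity : 0 < ε / (C + D + 1))
  have hscale : ∀ {A : ℝ}, A ≤ C + D → A * √(∫ x, (K x - G x) ^ 2) ≤ ε := fun {A} hA =>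
    calc A * √(∫ x, (K x - G x) ^ 2) ≤ (C + D + 1) * (ε / (C + D + 1)) := by gcongr; linarith
      _ = ε := mul_div_cancel₀ _ (by positivity)
  refine ⟨_, _, hasDerivAt_integral_mul_of_hasCompactSupport (μ := volume)
    (fun s => (u s).continuous) hu.continuous_timeDeriv hu.hasDerivAt hG hGs t, ?_, fun s => ?_⟩
  · rw [abs_sub_comm]
    exact (abs_integral_mul_sub_integral_mul_le (rapidDecay_timeDeriv hp (u t)).memLp_two
      hK hG2).trans (hscale (by linarith))
  · have hu2 : ∀ r, MemLp (u r) 2 := fun r => (rapidDecay_schwartz (u r)).memLp_two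
    have hincr : ∀ {H : ℝ → ℝ}, MemLp H 2 →
        (∫ x, u s x * H x) - ∫ x, u t x * H x = ∫ x, (u s x - u t x) * H x := fun {H} hH => by
      simp only [sub_mul]
      exact (integral_sub ((hu2 s).integrable_mul hH) ((hu2 t).integrable_mul hH)).symm
    rw [hincr hK, hincr hG2]
    calc |(∫ x, (u s x - u t x) * K x) - ∫ x, (u s x - u t x) * G x|
        ≤ √(∫ x, (u s x - u t x) ^ 2) * √(∫ x, (K x - G x) ^ 2) :=
          abs_integral_mul_sub_integral_mul_le ((hu2 s).sub (hu2 t)) hK hG2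
      _ ≤ C * |s - t| * √(∫ x, (K x - G x) ^ 2) := by gcongr; exact hlip s
      _ = C * √(∫ x, (K x - G x) ^ 2) * |s - t| := by ring
      _ ≤ ε * |s - t| := by gcongr; exact hscale (by linarith)

theorem hasDerivAt_integral_mul_sq (hu : IsGKdVSolution p M E u) {φ : ℝ → ℝ} {C : ℝ}
    (hφ : Continuous φ) (hC : ∀ x, |φ x| ≤ C) (t : ℝ) :
    HasDerivAt (fun s => ∫ x, φ x * u s x ^ 2)
      (∫ x, timeDeriv p (u t) x * (2 * φ x * u t x)) t := by
  have hg : PolyGrowth φ := .of_bounded hφ hC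
  have hremainder : HasDerivAt (fun s => ∫ x, φ x * (u s x - u t x) ^ 2) 0 t := by
    refine hasDerivAt_integral_mul_zero_of_nonneg hC
      (fun s => RapidDecay.integrable (by fun_prop)) (fun s x => sq_nonneg _) (by simp) ?_
    simp only [hu.integral_sub_sq _ t]
    refine (((hu.hasDerivAt_integral_mul_schwartz (u t) t).const_mul 2).const_sub _).congr_deriv ?_
    rw [integral_timeDeriv_mul_self hu.one_lt, mul_zero, neg_zero]
  have hlinear : HasDerivAt (fun s => ∫ x, u s x * (2 * φ x * u t x))
      (∫ x, timeDeriv p (u t) x * (2 * φ x * u t x)) t :=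
    hu.hasDerivAt_integral_mul (RapidDecay.memLp_two (by fun_prop)) t
  have hexpand : ∀ s, ∫ x, φ x * u s x ^ 2 = (∫ x, φ x * (u s x - u t x) ^ 2)
      + (∫ x, u s x * (2 * φ x * u t x)) - ∫ x, φ x * u t x ^ 2 := fun s => by
    rw [← integral_add (RapidDecay.integrable (by fun_prop)) (RapidDecay.integrable (by fun_prop)),
      ← integral_sub (RapidDecay.integrable (by fun_prop)) (RapidDecay.integrable (by fun_prop))]
    congr! 2 with x
    ring
  rw [funext hexpand]
  simpa only [zero_add] using (hremainder.fun_add hlinear).sub_const _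

theorem hasDerivAt_integral_mul_energyDensity (hu : IsGKdVSolution p M E u) {ψ ψ₁ : ℝ → ℝ} {C : ℝ}
    (hψ : ∀ x, HasDerivAt ψ (ψ₁ x) x) (hC : ∀ x, |ψ x| ≤ C) (hψ₁ : PolyGrowth ψ₁) (t : ℝ) :
    HasDerivAt (fun s => ∫ x, ψ x * energyDensity p (u s) x)
      (∫ x, -(timeDeriv p (u t) x *
        (ψ₁ x * ∂ₓ (u t) x + ψ x * negEnergyGradient p (u t) x))) t := by
  have hp := hu.one_lt
  have hg : PolyGrowth ψ :=
    .of_bounded (continuous_iff_continuousAt.2 fun x => (hψ x).continuousAt) hC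
  have hremainder : HasDerivAt (fun s => ∫ x, ψ x * energyRemainder p (u t) (u s) x) 0 t := by
    refine hasDerivAt_integral_mul_zero_of_nonneg hC
      (fun s => RapidDecay.integrable (by fun_prop (disch := assumption)))
      (fun s x => energyRemainder_nonneg hp _ _ x) (by simp [energyRemainder]) ?_
    have htotal : ∀ s, ∫ x, energyRemainder p (u t) (u s) x
        = (∫ x, u s x * negEnergyGradient p (u t) x)
          - ∫ x, u t x * negEnergyGradient p (u t) x := fun s => by
      simpa [hu.energy_eq] using integral_mul_energyRemainder hp (u t) (u s)
        (fun _ => hasDerivAt_const _ 1) (.const 1) (.const 0)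
    simp only [htotal]
    refine ((hu.hasDerivAt_integral_mul ?_ t).sub_const _).congr_deriv
      (integral_timeDeriv_mul_negEnergyGradient hp (u t))
    exact RapidDecay.memLp_two (by fun_prop (disch := assumption))
  have hlinear : HasDerivAt
      (fun s => ∫ x, u s x * (ψ₁ x * ∂ₓ (u t) x + ψ x * negEnergyGradient p (u t) x))
      (∫ x, timeDeriv p (u t) x * (ψ₁ x * ∂ₓ (u t) x + ψ x * negEnergyGradient p (u t) x)) t :=
    hu.hasDerivAt_integral_mul (RapidDecay.memLp_two (by fun_prop (disch := assumption))) t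
  have hexpand : ∀ s, ∫ x, ψ x * energyDensity p (u s) x
      = (∫ x, ψ x * energyRemainder p (u t) (u s) x)
        - (∫ x, u s x * (ψ₁ x * ∂ₓ (u t) x + ψ x * negEnergyGradient p (u t) x))
        + ((∫ x, ψ x * energyDensity p (u t) x)
          + ∫ x, u t x * (ψ₁ x * ∂ₓ (u t) x + ψ x * negEnergyGradient p (u t) x)) := fun s => by
    rw [integral_mul_energyRemainder hp (u t) (u s) hψ hg hψ₁]
    ring
  rw [funext hexpand, integral_neg]
  simpa only [zero_sub] using (hremainder.fun_sub hlinear).add_const _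

end IsGKdVSolution

section Reflection

/-- The profile `x ↦ f (-x)`. -/
noncomputable def reflect (f : 𝓢(ℝ, ℝ)) : 𝓢(ℝ, ℝ) :=
  SchwartzMap.compCLMOfContinuousLinearEquiv ℝ (ContinuousLinearEquiv.neg ℝ) f

variable {p M E : ℝ} {u : ℝ → 𝓢(ℝ, ℝ)}

theorem reflect_apply (f : 𝓢(ℝ, ℝ)) (x : ℝ) : reflect f x = f (-x) := rfl

theorem deriv_reflect (f : 𝓢(ℝ, ℝ)) : ∂ₓ (reflect f) = -reflect (∂ₓ f) := by
  ext x
  exact ((hasDerivAt_schwartz (reflect f) x).unique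
    ((hasDerivAt_schwartz f (-x)).comp x (hasDerivAt_neg x))).trans (mul_neg_one _)

theorem energyDensity_reflect (f : 𝓢(ℝ, ℝ)) (x : ℝ) :
    energyDensity p (reflect f) x = energyDensity p f (-x) := by
  simp [energyDensity, deriv_reflect, reflect_apply]

theorem timeDeriv_reflect (f : 𝓢(ℝ, ℝ)) (x : ℝ) :
    timeDeriv p (reflect f) x = -timeDeriv p f (-x) := by
  simp only [timeDeriv, deriv_reflect, map_neg, neg_apply, reflect_apply]
  ring

theorem IsGKdVSolution.reflect_neg (hu : IsGKdVSolution p M E u) :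
    IsGKdVSolution p M E fun t => reflect (u (-t)) where
  one_lt := hu.one_lt
  contDiff := hu.contDiff.comp (contDiff_neg)
  hasDerivAt t x := ((hu.hasDerivAt (-t) (-x)).comp t (hasDerivAt_neg t)).congr_deriv
    (by rw [timeDeriv_reflect, mul_neg_one])
  mass_eq t := by
    simp only [reflect_apply]
    rw [integral_neg_eq_self (fun x => u (-t) x ^ 2), hu.mass_eq]
  energy_eq t := by
    simp only [energyDensity_reflect]
    rw [integral_neg_eq_self (fun x => energyDensity p (u (-t)) x), hu.energy_eq]

end Reflection

section KatoWeight

variable {p M E ε : ℝ} {u : ℝ → 𝓢(ℝ, ℝ)}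

/-- Kato's weight: increasing in `x`, bounded for `ε > 0`, and `(x + √(1 + x ^ 2)) ^ 2` for `ε = 0`,
which is quadratic on the right half-line. -/
noncomputable def katoWeight (ε x : ℝ) : ℝ :=
  (ε + exp (-(2 * arsinh x)))⁻¹

/-- The derivative of `katoWeight ε`. -/
noncomputable def katoWeightDeriv (ε x : ℝ) : ℝ :=
  2 * (√(1 + x ^ 2))⁻¹ * (katoWeight ε x * (1 - ε * katoWeight ε x))

/-- The logarithmic derivative of `katoWeightDeriv ε`. -/
noncomputable def katoWeightDerivLogDeriv (ε x : ℝ) : ℝ :=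
  2 * (√(1 + x ^ 2))⁻¹ * (1 - 2 * (ε * katoWeight ε x)) - x / (1 + x ^ 2)

theorem katoWeight_pos (hε : 0 ≤ ε) (x : ℝ) : 0 < katoWeight ε x :=
  inv_pos.2 (add_pos_of_nonneg_of_pos hε (exp_pos _))

theorem katoWeight_le_inv (hε : 0 < ε) (x : ℝ) : katoWeight ε x ≤ ε⁻¹ :=
  inv_anti₀ hε (le_add_of_nonneg_right (exp_pos _).le)

theorem katoWeight_le_katoWeight_zero (hε : 0 ≤ ε) (x : ℝ) : katoWeight ε x ≤ katoWeight 0 x := by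
  unfold katoWeight
  gcongr

theorem mul_katoWeight_nonneg (hε : 0 ≤ ε) (x : ℝ) : 0 ≤ ε * katoWeight ε x :=
  mul_nonneg hε (katoWeight_pos hε x).le

theorem mul_katoWeight_le_one (hε : 0 ≤ ε) (x : ℝ) : ε * katoWeight ε x ≤ 1 :=
  (div_le_one₀ (by positivity)).2 (le_add_of_nonneg_right (exp_pos _).le)

theorem katoWeight_zero_add_katoWeight_zero_neg (x : ℝ) :
    katoWeight 0 x + katoWeight 0 (-x) = 2 + 4 * x ^ 2 := by
  have hsq : √(1 + x ^ 2) ^ 2 = 1 + x ^ 2 := sq_sqrt (by positivity)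
  have hexp : ∀ y, katoWeight 0 y = (y + √(1 + y ^ 2)) ^ 2 := fun y => by
    rw [katoWeight, zero_add, exp_neg, inv_inv, ← exp_arsinh, ← exp_nat_mul, Nat.cast_two]
  rw [hexp, hexp, neg_sq]
  linear_combination 2 * hsq

theorem inv_sqrt_one_add_sq_le_one (x : ℝ) : (√(1 + x ^ 2))⁻¹ ≤ 1 :=
  inv_le_one_of_one_le₀ (one_le_sqrt.2 (le_add_of_nonneg_right (sq_nonneg x)))

theorem katoWeightDeriv_nonneg (hε : 0 ≤ ε) (x : ℝ) : 0 ≤ katoWeightDeriv ε x :=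
  mul_nonneg (by positivity) (mul_nonneg (katoWeight_pos hε x).le
    (sub_nonneg.2 (mul_katoWeight_le_one hε x)))

theorem katoWeightDeriv_le (hε : 0 ≤ ε) (x : ℝ) : katoWeightDeriv ε x ≤ 2 * katoWeight ε x := by
  have hψ := katoWeight_pos hε x
  calc katoWeightDeriv ε x ≤ 2 * 1 * (katoWeight ε x * 1) := by
        unfold katoWeightDeriv
        gcongr
        exacts [mul_nonneg hψ.le (sub_nonneg.2 (mul_katoWeight_le_one hε x)),
          inv_sqrt_one_add_sq_le_one x, sub_le_self _ (mul_katoWeight_nonneg hε x)]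
    _ = 2 * katoWeight ε x := by ring

theorem hasDerivAt_katoWeight (hε : 0 ≤ ε) (x : ℝ) :
    HasDerivAt (katoWeight ε) (katoWeightDeriv ε x) x := by
  have hpos : 0 < ε + exp (-(2 * arsinh x)) := by positivity
  have hinv := (((hasDerivAt_arsinh x).const_mul 2).fun_neg.exp.const_add ε).fun_inv hpos.ne'
  refine hinv.congr_deriv ?_
  unfold katoWeightDeriv katoWeight
  field_simp
  ring

theorem hasDerivAt_katoWeightDeriv (hε : 0 ≤ ε) (x : ℝ) :
    HasDerivAt (katoWeightDeriv ε) (katoWeightDeriv ε x * katoWeightDerivLogDeriv ε x) x := by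
  have hpos : 0 < 1 + x ^ 2 := by positivity
  have hψ := hasDerivAt_katoWeight hε x
  have hsqrt := ((((hasDerivAt_pow 2 x).const_add 1).sqrt hpos.ne').fun_inv
    (sqrt_pos.2 hpos).ne').const_mul 2
  refine (hsqrt.fun_mul (hψ.fun_mul ((hψ.const_mul ε).const_sub 1))).congr_deriv ?_
  have hdiv : x / (1 + x ^ 2) = x * (√(1 + x ^ 2))⁻¹ ^ 2 := by
    rw [inv_pow, sq_sqrt hpos.le, div_eq_mul_inv]
  unfold katoWeightDerivLogDeriv katoWeightDeriv
  rw [hdiv, Nat.cast_two, pow_one]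
  field_simp
  ring

theorem abs_katoWeightDerivLogDeriv_le (hε : 0 ≤ ε) (x : ℝ) :
    |katoWeightDerivLogDeriv ε x| ≤ 3 := by
  have hx : |x / (1 + x ^ 2)| ≤ 1 := by
    rw [abs_div, abs_of_pos (by positivity : 0 < 1 + x ^ 2), div_le_one₀ (by positivity)]
    nlinarith [sq_abs x, sq_nonneg (|x| - 1)]
  have hε1 : |1 - 2 * (ε * katoWeight ε x)| ≤ 1 :=
    abs_le.2 ⟨by linarith [mul_katoWeight_le_one hε x], by linarith [mul_katoWeight_nonneg hε x]⟩
  calc |katoWeightDerivLogDeriv ε x|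
      ≤ 2 * (√(1 + x ^ 2))⁻¹ * |1 - 2 * (ε * katoWeight ε x)| + |x / (1 + x ^ 2)| := by
        refine (abs_sub _ _).trans_eq ?_
        rw [abs_mul, abs_of_nonneg (by positivity : 0 ≤ 2 * (√(1 + x ^ 2))⁻¹)]
    _ ≤ 2 * 1 * 1 + 1 := by gcongr; exact inv_sqrt_one_add_sq_le_one x
    _ = 3 := by norm_num

theorem continuous_katoWeight (hε : 0 ≤ ε) : Continuous (katoWeight ε) :=
  continuous_iff_continuousAt.2 fun x => (hasDerivAt_katoWeight hε x).continuousAt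

theorem polyGrowth_katoWeightDeriv (hε : 0 < ε) : PolyGrowth (katoWeightDeriv ε) := by
  refine .of_bounded (C := 2 * ε⁻¹) (continuous_iff_continuousAt.2 fun x =>
    (hasDerivAt_katoWeightDeriv hε.le x).continuousAt) fun x => ?_
  rw [abs_of_nonneg (katoWeightDeriv_nonneg hε.le x)]
  linarith [katoWeightDeriv_le hε.le x, katoWeight_le_inv hε x]

theorem polyGrowth_katoWeightDerivLogDeriv (hε : 0 ≤ ε) :
    PolyGrowth (katoWeightDerivLogDeriv ε) := by
  have hψ := continuous_katoWeight hε
  have hpos : ∀ x : ℝ, 1 + x ^ 2 ≠ 0 := fun x => by positivity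
  have hsqrt : ∀ x : ℝ, √(1 + x ^ 2) ≠ 0 := fun x => by positivity
  refine .of_bounded ?_ (abs_katoWeightDerivLogDeriv_le hε)
  unfold katoWeightDerivLogDeriv
  fun_prop (disch := assumption)

theorem polyGrowth_katoWeight_zero : PolyGrowth (katoWeight 0) := by
  refine ⟨continuous_katoWeight le_rfl, 4, 2, by norm_num, fun x => ?_⟩
  rw [abs_of_pos (katoWeight_pos le_rfl x), norm_eq_abs]
  have hneg := katoWeight_pos le_rfl (-x)
  nlinarith [katoWeight_zero_add_katoWeight_zero_neg x, sq_abs x, abs_nonneg x]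

theorem polyGrowth_katoWeight_zero_neg : PolyGrowth fun x => katoWeight 0 (-x) := by
  obtain ⟨C, k, hC, hb⟩ := polyGrowth_katoWeight_zero.bound
  exact ⟨polyGrowth_katoWeight_zero.continuous.comp continuous_neg, C, k, hC,
    fun x => by simpa using hb (-x)⟩

/-- Kato's smoothing effect: the flux of energy through an increasing weight is controlled by the
weighted energy itself. -/
theorem IsGKdVSolution.integral_katoWeight_mul_energyDensity_le (hu : IsGKdVSolution p M E u)
    (hε : 0 < ε) {r t : ℝ} (hrt : r ≤ t) :
    ∫ x, katoWeight ε x * energyDensity p (u t) x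
      ≤ (∫ x, katoWeight ε x * energyDensity p (u r) x)
        * exp ((18 + (p + 1) * √(M + 2 * E) ^ (p - 1)) * (t - r)) := by
  have hψb : ∀ x, |katoWeight ε x| ≤ ε⁻¹ := fun x =>
    (abs_of_pos (katoWeight_pos hε.le x)).trans_le (katoWeight_le_inv hε x)
  have hψ : PolyGrowth (katoWeight ε) := .of_bounded (continuous_katoWeight hε.le) hψb
  have hψ₁ := polyGrowth_katoWeightDeriv hε
  have hψ₂ : PolyGrowth fun x => katoWeightDeriv ε x * katoWeightDerivLogDeriv ε x :=
    hψ₁.mul (polyGrowth_katoWeightDerivLogDeriv hε.le)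
  have hψ₂b : ∀ x, |katoWeightDeriv ε x * katoWeightDerivLogDeriv ε x| ≤ 3 * katoWeightDeriv ε x :=
    fun x => by
      rw [abs_mul, abs_of_nonneg (katoWeightDeriv_nonneg hε.le x), mul_comm]
      exact mul_le_mul_of_nonneg_right (abs_katoWeightDerivLogDeriv_le hε.le x)
        (katoWeightDeriv_nonneg hε.le x)
  have hderiv := hu.hasDerivAt_integral_mul_energyDensity (hasDerivAt_katoWeight hε.le) hψb hψ₁
  rw [← gronwallBound_ε0]
  refine le_gronwallBound_of_liminf_deriv_right_le
    (fun s _ => (hderiv s).continuousAt.continuousWithinAt)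
    (fun s _ _ => (hderiv s).hasDerivWithinAt.liminf_right_slope_le) le_rfl (fun s _ => ?_) t
    ⟨hrt, le_rfl⟩
  rw [add_zero]
  exact integral_timeDeriv_energyFlux_le hu.one_lt (hu.abs_le_sqrt s)
    (hasDerivAt_katoWeight hε.le) (hasDerivAt_katoWeightDeriv hε.le) hψ hψ₁ hψ₂
    (katoWeightDeriv_nonneg hε.le) (katoWeightDeriv_le hε.le) hψ₂b

theorem tendsto_integral_katoWeight_mul {F : ℝ → ℝ} (hF : RapidDecay F) :
    Tendsto (fun ε => ∫ x, katoWeight ε x * F x) (𝓝[>] 0) (𝓝 (∫ x, katoWeight 0 x * F x)) := by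
  have hw := polyGrowth_katoWeight_zero
  refine tendsto_integral_filter_of_dominated_convergence (fun x => katoWeight 0 x * |F x|)
    ?_ ?_ (RapidDecay.integrable (by fun_prop)) (ae_of_all _ fun x => ?_)
  · filter_upwards [self_mem_nhdsWithin] with ε hε
    exact ((continuous_katoWeight (le_of_lt hε)).mul hF.continuous).aestronglyMeasurable
  · filter_upwards [self_mem_nhdsWithin] with ε hε
    refine ae_of_all _ fun x => ?_
    rw [norm_mul, norm_of_nonneg (katoWeight_pos (le_of_lt hε) x).le, norm_eq_abs]
    gcongr
    exact katoWeight_le_katoWeight_zero (le_of_lt hε) x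
  · have hcont : ContinuousAt (fun ε => katoWeight ε x) 0 :=
      (continuousAt_id.add continuousAt_const).inv₀ (by simp [exp_ne_zero])
    exact (hcont.tendsto.mono_left nhdsWithin_le_nhds).mul_const _

theorem IsGKdVSolution.integral_katoWeight_zero_mul_energyDensity_le (hu : IsGKdVSolution p M E u)
    {r t : ℝ} (hrt : r ≤ t) :
    ∫ x, katoWeight 0 x * energyDensity p (u t) x
      ≤ (∫ x, katoWeight 0 x * energyDensity p (u r) x)
        * exp ((18 + (p + 1) * √(M + 2 * E) ^ (p - 1)) * (t - r)) := by
  have hlim := fun s => tendsto_integral_katoWeight_mul (rapidDecay_energyDensity hu.one_lt (u s))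
  refine le_of_tendsto_of_tendsto (hlim t) ((hlim r).mul_const _) ?_
  filter_upwards [self_mem_nhdsWithin] with ε hε
  exact hu.integral_katoWeight_mul_energyDensity_le hε hrt

theorem integral_one_add_sq_mul_energyDensity_le (hp : 1 < p) (f : 𝓢(ℝ, ℝ)) :
    ∫ x, (1 + x ^ 2) * energyDensity p f x
      ≤ (∫ x, katoWeight 0 x * energyDensity p f x)
        + ∫ x, katoWeight 0 x * energyDensity p (reflect f) x := by
  have hw := polyGrowth_katoWeight_zero
  have hw' := polyGrowth_katoWeight_zero_neg
  rw [← integral_neg_eq_self fun x => katoWeight 0 x * energyDensity p (reflect f) x]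
  simp only [energyDensity_reflect, neg_neg]
  rw [← integral_add (RapidDecay.integrable (by fun_prop (disch := assumption)))
    (RapidDecay.integrable (by fun_prop (disch := assumption)))]
  refine integral_mono (RapidDecay.integrable (by fun_prop (disch := assumption)))
    (RapidDecay.integrable (by fun_prop (disch := assumption))) fun x => ?_
  simp only [← add_mul, katoWeight_zero_add_katoWeight_zero_neg]
  gcongr
  · exact energyDensity_nonneg hp _ x
  · norm_num
  · linarith [sq_nonneg x]

/-- The right half-line is controlled from the past, the left half-line from the future. -/
theorem IsGKdVSolution.integral_one_add_sq_mul_energyDensity_le_of_mem_ball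
    (hu : IsGKdVSolution p M E u) {s t : ℝ} (hs : s ∈ Metric.ball t 1) :
    ∫ x, (1 + x ^ 2) * energyDensity p (u s) x
      ≤ ((∫ x, katoWeight 0 x * energyDensity p (u (t - 1)) x)
          + ∫ x, katoWeight 0 x * energyDensity p (reflect (u (t + 1))) x)
        * exp ((18 + (p + 1) * √(M + 2 * E) ^ (p - 1)) * 2) := by
  have hp := hu.one_lt
  have hgrow : ∀ {v : ℝ → 𝓢(ℝ, ℝ)}, IsGKdVSolution p M E v → ∀ {r s : ℝ}, r ≤ s → s - r ≤ 2 →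
      ∫ x, katoWeight 0 x * energyDensity p (v s) x
        ≤ (∫ x, katoWeight 0 x * energyDensity p (v r) x)
          * exp ((18 + (p + 1) * √(M + 2 * E) ^ (p - 1)) * 2) := fun {v} hv {r s} hrs hsr =>
    (hv.integral_katoWeight_zero_mul_energyDensity_le hrs).trans (by
      gcongr
      exact integral_nonneg fun x =>
        mul_nonneg (katoWeight_pos le_rfl x).le (energyDensity_nonneg hp _ x))
  obtain ⟨hs₁, hs₂⟩ := abs_lt.1 (Metric.mem_ball.1 hs)
  refine (integral_one_add_sq_mul_energyDensity_le hp (u s)).trans ?_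
  rw [add_mul]
  refine add_le_add (hgrow hu (by linarith) (by linarith)) ?_
  simpa only [neg_neg] using
    hgrow hu.reflect_neg (r := -(t + 1)) (s := -s) (by linarith) (by linarith)

theorem IsGKdVSolution.exists_integral_sub_sq_mul_energyDensity_le
    (hu : IsGKdVSolution p M E u) (a t : ℝ) :
    ∃ C, ∀ s ∈ Metric.ball t 1, ∫ x, (x - a) ^ 2 * energyDensity p (u s) x ≤ C := by
  have hp := hu.one_lt
  refine ⟨_, fun s hs => le_trans ?_ (mul_le_mul_of_nonneg_left
    (hu.integral_one_add_sq_mul_energyDensity_le_of_mem_ball hs)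
    (by positivity : 0 ≤ 2 * (1 + a ^ 2)))⟩
  rw [← integral_const_mul]
  refine integral_mono (RapidDecay.integrable (by fun_prop (disch := assumption)))
    (RapidDecay.integrable (by fun_prop (disch := assumption))) fun x => ?_
  simp only [← mul_assoc]
  gcongr
  · exact energyDensity_nonneg hp _ x
  · nlinarith [sq_nonneg (x + a), mul_nonneg (sq_nonneg a) (sq_nonneg x)]

end KatoWeight

section QuadraticCutoff

/-- A bounded smooth substitute for `y ^ 2`, to which it converges as `c → 0`; equivalently
`2 * (1 - cos (c * y)) / c ^ 2`. -/
noncomputable def quadraticCutoff (c y : ℝ) : ℝ :=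
  (2 / c * sin (c / 2 * y)) ^ 2

variable {c : ℝ}

theorem abs_quadraticCutoff_le (c y : ℝ) : |quadraticCutoff c y| ≤ (2 / c) ^ 2 := by
  rw [quadraticCutoff, mul_pow, abs_of_nonneg (by positivity)]
  exact mul_le_of_le_one_right (sq_nonneg _) (sin_sq_le_one _)

theorem quadraticCutoff_eq_sinc (hc : c ≠ 0) (y : ℝ) :
    quadraticCutoff c y = (y * sinc (c / 2 * y)) ^ 2 := by
  rcases eq_or_ne y 0 with rfl | hy
  · simp [quadraticCutoff]
  · rw [quadraticCutoff, sinc_of_ne_zero (by positivity)]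
    field_simp

theorem quadraticCutoff_le_sq (hc : c ≠ 0) (y : ℝ) : quadraticCutoff c y ≤ y ^ 2 := by
  rw [quadraticCutoff_eq_sinc hc, mul_pow]
  exact mul_le_of_le_one_right (sq_nonneg _) ((sq_le_one_iff_abs_le_one _).2 (abs_sinc_le_one _))

theorem tendsto_quadraticCutoff (y : ℝ) :
    Tendsto (fun c => quadraticCutoff c y) (𝓝[>] 0) (𝓝 (y ^ 2)) := by
  have hcont : Continuous fun c : ℝ => (y * sinc (c / 2 * y)) ^ 2 := by
    have := continuous_sinc
    fun_prop
  refine (((hcont.tendsto' 0 (y ^ 2) (by simp)).mono_left nhdsWithin_le_nhds)).congr' ?_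
  filter_upwards [self_mem_nhdsWithin] with c hc
  exact (quadraticCutoff_eq_sinc (ne_of_gt hc) y).symm

theorem hasDerivAt_quadraticCutoff (hc : c ≠ 0) (y : ℝ) :
    HasDerivAt (quadraticCutoff c) (2 / c * sin (c * y)) y := by
  have hsin := ((((hasDerivAt_id' y).const_mul (c / 2)).sin).const_mul (2 / c)).fun_pow 2
  refine hsin.congr_deriv ?_
  rw [show c * y = 2 * (c / 2 * y) by ring, sin_two_mul]
  push_cast
  field_simp

theorem abs_sub_sin_le_sq (y : ℝ) : |y - sin y| ≤ y ^ 2 := by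
  rw [← sq_abs]
  rcases le_total |y| 2 with hy | hy
  · refine (abs_sub_sin_le y).trans ?_
    nlinarith [sq_nonneg |y|]
  · calc |y - sin y| ≤ |y| + |sin y| := abs_sub _ _
      _ ≤ |y| + |y| := add_le_add_right abs_sin_le_abs _
      _ ≤ |y| ^ 2 := by nlinarith

theorem abs_deriv_quadraticCutoff_sub_le (hc : 0 < c) (y : ℝ) :
    |2 * y - 2 / c * sin (c * y)| ≤ 2 * c * y ^ 2 := by
  calc |2 * y - 2 / c * sin (c * y)| = 2 / c * |c * y - sin (c * y)| := by
        rw [show 2 * y - 2 / c * sin (c * y) = 2 / c * (c * y - sin (c * y)) by field_simp,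
          abs_mul, abs_of_pos (by positivity)]
    _ ≤ 2 / c * (c * y) ^ 2 := by gcongr; exact abs_sub_sin_le_sq _
    _ = 2 * c * y ^ 2 := by field_simp

theorem polyGrowth_sin (c a : ℝ) : PolyGrowth fun x : ℝ => sin (c * (x - a)) :=
  .of_bounded (by fun_prop) fun _ => abs_sin_le_one _

theorem polyGrowth_quadraticCutoff (c a : ℝ) : PolyGrowth fun x => quadraticCutoff c (x - a) :=
  ((PolyGrowth.const _).mul (polyGrowth_sin _ a)).pow 2

end QuadraticCutoff

section Virial

variable {p M E c : ℝ} {u : ℝ → 𝓢(ℝ, ℝ)}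

/-- The flux of the mass density `f ^ 2`, towards `-∞` and up to a third derivative in space. -/
noncomputable def massFlux (p : ℝ) (f : 𝓢(ℝ, ℝ)) (x : ℝ) : ℝ :=
  3 * ∂ₓ f x ^ 2 + 2 * p / (p + 1) * |f x| ^ (p + 1)

theorem rapidDecay_massFlux (hp : 1 < p) (f : 𝓢(ℝ, ℝ)) : RapidDecay fun x => massFlux p f x := by
  have := rapidDecay_abs_rpow_add_one hp f
  unfold massFlux
  fun_prop

theorem massFlux_eq (f : 𝓢(ℝ, ℝ)) (x : ℝ) :
    massFlux p f x = 6 * energyDensity p f x + (2 * p - 6) / (p + 1) * |f x| ^ (p + 1) := by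
  unfold massFlux energyDensity
  ring

theorem abs_massFlux_le (hp : 1 < p) (f : 𝓢(ℝ, ℝ)) (x : ℝ) :
    |massFlux p f x| ≤ (6 + 2 * p) * energyDensity p f x := by
  have hq : 0 ≤ |f x| ^ (p + 1) / (p + 1) := by positivity
  have hflux : massFlux p f x = 3 * ∂ₓ f x ^ 2 + 2 * p * (|f x| ^ (p + 1) / (p + 1)) := by
    unfold massFlux
    ring
  rw [hflux, abs_of_nonneg (by positivity), energyDensity]
  nlinarith [mul_nonneg (zero_lt_one.trans hp).le (sq_nonneg (∂ₓ f x))]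

theorem IsGKdVSolution.hasDerivAt_integral_quadraticCutoff_mul_sq (hu : IsGKdVSolution p M E u)
    (hc : c ≠ 0) (a t : ℝ) :
    HasDerivAt (fun s => ∫ x, quadraticCutoff c (x - a) * u s x ^ 2)
      (∫ x, (-(2 * c) * sin (c * (x - a)) * u t x ^ 2
        - 2 / c * sin (c * (x - a)) * massFlux p (u t) x)) t := by
  have hφ := polyGrowth_quadraticCutoff c a
  have hsin := polyGrowth_sin c a
  have hcos : PolyGrowth fun x : ℝ => cos (c * (x - a)) :=
    .of_bounded (by fun_prop) fun _ => abs_cos_le_one _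
  have harg : ∀ x, HasDerivAt (fun x => c * (x - a)) (c * 1) x := fun x =>
    ((hasDerivAt_id' x).sub_const a).const_mul c
  refine (hu.hasDerivAt_integral_mul_sq hφ.continuous
    (fun x => abs_quadraticCutoff_le c (x - a)) t).congr_deriv ?_
  exact integral_timeDeriv_mul_weighted_self hu.one_lt (u t)
    (φ₂ := fun x => 2 * cos (c * (x - a)))
    (fun x => (hasDerivAt_quadraticCutoff hc (x - a)).comp_sub_const x a)
    (fun x => ((harg x).sin.const_mul (2 / c)).congr_deriv (by field_simp))
    (fun x => ((harg x).cos.const_mul 2).congr_deriv (by ring))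
    hφ (by fun_prop) (by fun_prop) (by fun_prop)

theorem abs_integral_quadraticCutoff_flux_sub_le (hp : 1 < p) (hc : 0 < c) (f : 𝓢(ℝ, ℝ)) (a : ℝ) :
    |(∫ x, (-(2 * c) * sin (c * (x - a)) * f x ^ 2 - 2 / c * sin (c * (x - a)) * massFlux p f x))
        - ∫ x, -(2 * (x - a) * massFlux p f x)|
      ≤ 2 * c * ((∫ x, f x ^ 2) + (6 + 2 * p) * ∫ x, (x - a) ^ 2 * energyDensity p f x) := by
  have hsin := polyGrowth_sin c a
  have hF := rapidDecay_massFlux hp f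
  rw [← integral_const_mul, ← integral_add (RapidDecay.integrable (by fun_prop))
      (RapidDecay.integrable (by fun_prop (disch := assumption))), ← integral_const_mul,
    ← integral_sub (RapidDecay.integrable (by fun_prop)) (RapidDecay.integrable (by fun_prop))]
  refine abs_integral_le_integral_abs.trans (integral_mono (RapidDecay.integrable (by fun_prop))
    (RapidDecay.integrable (by fun_prop (disch := assumption))) fun x => ?_)
  calc |-(2 * c) * sin (c * (x - a)) * f x ^ 2 - 2 / c * sin (c * (x - a)) * massFlux p f x
        - -(2 * (x - a) * massFlux p f x)|
      = |(2 * (x - a) - 2 / c * sin (c * (x - a))) * massFlux p f x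
          - 2 * c * f x ^ 2 * sin (c * (x - a))| := by congr 1; ring
    _ ≤ |2 * (x - a) - 2 / c * sin (c * (x - a))| * |massFlux p f x|
          + 2 * c * f x ^ 2 * |sin (c * (x - a))| := by
        refine (abs_sub _ _).trans_eq ?_
        rw [abs_mul, abs_mul, abs_of_nonneg (by positivity : 0 ≤ 2 * c * f x ^ 2)]
    _ ≤ 2 * c * (x - a) ^ 2 * ((6 + 2 * p) * energyDensity p f x) + 2 * c * f x ^ 2 * 1 := by
        gcongr
        exacts [abs_deriv_quadraticCutoff_sub_le hc _, abs_massFlux_le hp f x, abs_sin_le_one _]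
    _ = 2 * c * (f x ^ 2 + (6 + 2 * p) * ((x - a) ^ 2 * energyDensity p f x)) := by ring

theorem tendsto_integral_quadraticCutoff_mul_sq (f : 𝓢(ℝ, ℝ)) (a : ℝ) :
    Tendsto (fun c => ∫ x, quadraticCutoff c (x - a) * f x ^ 2) (𝓝[>] 0)
      (𝓝 (∫ x, (x - a) ^ 2 * f x ^ 2)) := by
  refine tendsto_integral_filter_of_dominated_convergence (fun x => (x - a) ^ 2 * f x ^ 2)
    (Eventually.of_forall fun c => ?_) ?_ (RapidDecay.integrable (by fun_prop))
    (ae_of_all _ fun x => (tendsto_quadraticCutoff (x - a)).mul_const _)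
  · exact ((polyGrowth_quadraticCutoff c a).continuous.mul
      ((f.continuous).pow 2)).aestronglyMeasurable
  · filter_upwards [self_mem_nhdsWithin] with c hc
    refine ae_of_all _ fun x => ?_
    have hnonneg : 0 ≤ quadraticCutoff c (x - a) := sq_nonneg _
    rw [norm_of_nonneg (by positivity)]
    gcongr
    exact quadraticCutoff_le_sq (ne_of_gt hc) _

theorem IsGKdVSolution.hasDerivAt_integral_sub_sq_mul_sq (hu : IsGKdVSolution p M E u) (a t : ℝ) :
    HasDerivAt (fun s => ∫ x, (x - a) ^ 2 * u s x ^ 2)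
      (∫ x, -(2 * (x - a) * massFlux p (u t) x)) t := by
  have hp := hu.one_lt
  obtain ⟨C, hC⟩ := hu.exists_integral_sub_sq_mul_energyDensity_le a t
  have hunif : TendstoUniformlyOn
      (fun c s => ∫ x, (-(2 * c) * sin (c * (x - a)) * u s x ^ 2
        - 2 / c * sin (c * (x - a)) * massFlux p (u s) x))
      (fun s => ∫ x, -(2 * (x - a) * massFlux p (u s) x)) (𝓝[>] 0) (Metric.ball t 1) := by
    have hbound : Tendsto (fun c : ℝ => 2 * c * (M + (6 + 2 * p) * C)) (𝓝[>] 0) (𝓝 0) := by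
      refine tendsto_nhdsWithin_of_tendsto_nhds (Continuous.tendsto' ?_ _ _ (by simp))
      fun_prop
    refine Metric.tendstoUniformlyOn_iff.2 fun ε hε => ?_
    filter_upwards [hbound.eventually_lt_const hε, self_mem_nhdsWithin] with c hcε hc s hs
    have hc : 0 < c := hc
    rw [dist_comm, Real.dist_eq]
    refine ((abs_integral_quadraticCutoff_flux_sub_le hp hc (u s) a).trans ?_).trans_lt hcε
    rw [hu.mass_eq]
    gcongr
    exact hC s hs
  refine hasDerivAt_of_tendstoUniformlyOn Metric.isOpen_ball hunif ?_
    (fun s _ => tendsto_integral_quadraticCutoff_mul_sq (u s) a) (Metric.mem_ball_self one_pos)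
  filter_upwards [self_mem_nhdsWithin] with c hc s _
  exact hu.hasDerivAt_integral_quadraticCutoff_mul_sq (ne_of_gt hc) a s

theorem integral_massFlux_moment (hp : 1 < p) (f : 𝓢(ℝ, ℝ)) (a : ℝ) :
    ∫ x, -(2 * (x - a) * massFlux p f x)
      = -12 * (∫ x, (x - a) * energyDensity p f x)
        - (4 * p - 12) / (p + 1) * ∫ x, (x - a) * |f x| ^ (p + 1) := by
  have := rapidDecay_abs_rpow_add_one hp f
  rw [← integral_const_mul, ← integral_const_mul,
    ← integral_sub (RapidDecay.integrable (by fun_prop (disch := assumption)))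
      (RapidDecay.integrable (by fun_prop))]
  congr! 2 with x
  rw [massFlux_eq]
  ring

theorem integral_sub_mul {F : ℝ → ℝ} (hF : RapidDecay F) (a : ℝ) :
    ∫ x, (x - a) * F x = (∫ x, x * F x) - a * ∫ x, F x := by
  simp only [sub_mul]
  rw [integral_sub (RapidDecay.integrable (by fun_prop)) (RapidDecay.integrable (by fun_prop)),
    integral_const_mul]

theorem integral_sub_sq_mul {F : ℝ → ℝ} (hF : RapidDecay F) (a b : ℝ) :
    ∫ x, (x - b) ^ 2 * F x
      = (∫ x, (x - a) ^ 2 * F x) - 2 * (b - a) * (∫ x, (x - a) * F x) + (b - a) ^ 2 * ∫ x, F x := by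
  rw [← integral_const_mul, ← integral_const_mul, ← integral_sub
    (RapidDecay.integrable (by fun_prop)) (RapidDecay.integrable (by fun_prop)), ← integral_add
    (RapidDecay.integrable (by fun_prop)) (RapidDecay.integrable (by fun_prop))]
  congr! 2 with x
  ring

theorem IsGKdVSolution.differentiable_integral_mul_sq (hu : IsGKdVSolution p M E u) :
    Differentiable ℝ fun s => ∫ x, x * u s x ^ 2 := by
  have hpolarize : ∀ s, ∫ x, x * u s x ^ 2
      = 1 / 2 * ((∫ x, (x - 0) ^ 2 * u s x ^ 2) - (∫ x, (x - 1) ^ 2 * u s x ^ 2) + M) := fun s => by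
    rw [integral_sub_sq_mul (rapidDecay_schwartz (u s)).sq 0 1, hu.mass_eq]
    simp only [sub_zero]
    ring
  rw [funext hpolarize]
  intro t
  exact (((hu.hasDerivAt_integral_sub_sq_mul_sq 0 t).fun_sub
    (hu.hasDerivAt_integral_sub_sq_mul_sq 1 t)).add_const M).const_mul _ |>.differentiableAt

/-- By the parallel axis theorem the motion of the center of mass contributes only to second
order. -/
theorem IsGKdVSolution.hasDerivAt_integral_sub_center_sq_mul_sq (hu : IsGKdVSolution p M E u)
    (hM : M ≠ 0) {m : ℝ → ℝ} (hm : ∀ t, m t = 1 / M * ∫ x, x * u t x ^ 2) (t : ℝ) :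
    HasDerivAt (fun s => ∫ x, (x - m s) ^ 2 * u s x ^ 2)
      (-12 * (∫ x, (x - m t) * energyDensity p (u t) x)
        - (4 * p - 12) / (p + 1) * ∫ x, (x - m t) * |u t x| ^ (p + 1)) t := by
  have hparallel : ∀ s, ∫ x, (x - m s) ^ 2 * u s x ^ 2
      = (∫ x, (x - m t) ^ 2 * u s x ^ 2) - M * (m s - m t) ^ 2 := fun s => by
    have hmean : ∫ x, x * u s x ^ 2 = M * m s := by rw [hm]; field_simp
    rw [integral_sub_sq_mul (rapidDecay_schwartz (u s)).sq (m t) (m s),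
      integral_sub_mul (rapidDecay_schwartz (u s)).sq, hu.mass_eq, hmean]
    ring
  have hmt : HasDerivAt m (deriv m t) t := by
    rw [funext hm]
    exact ((hu.differentiable_integral_mul_sq t).const_mul _).hasDerivAt
  rw [funext hparallel]
  refine ((hu.hasDerivAt_integral_sub_sq_mul_sq (m t) t).fun_sub
    (((hmt.sub_const (m t)).fun_pow 2).const_mul M)).congr_deriv ?_
  rw [integral_massFlux_moment hu.one_lt]
  simp

end Virial

section Equation

variable {p M E : ℝ} {U : ℝ → 𝓢(ℝ, ℝ)}

theorem deriv_eq_timeDeriv (hp : 1 < p) {t x : ℝ}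
    (hpde : deriv (fun s => U s x) t + iteratedDeriv 3 (fun y => U t y) x
      = deriv (fun y => |U t y| ^ (p - 1) * U t y) x) :
    deriv (fun s => U s x) t = timeDeriv p (U t) x := by
  have hdispersion : iteratedDeriv 3 (fun y => U t y) x = ∂ₓ (∂ₓ (∂ₓ (U t))) x := by
    rw [iteratedDeriv_succ, iteratedDeriv_succ, iteratedDeriv_one]
    rfl
  have hnonlinear : deriv (fun y => |U t y| ^ (p - 1) * U t y) x
      = p * |U t x| ^ (p - 1) * ∂ₓ (U t) x := (hasDerivAt_oddPow_schwartz hp (U t) x).deriv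
  rw [hdispersion, hnonlinear] at hpde
  unfold timeDeriv
  linarith

theorem IsGKdVSolution.of_pde (hp : 1 < p) (hsmooth : ContDiff ℝ 1 fun q : ℝ × ℝ => U q.1 q.2)
    (hpde : ∀ t x, deriv (fun s => U s x) t + iteratedDeriv 3 (fun y => U t y) x
      = deriv (fun y => |U t y| ^ (p - 1) * U t y) x)
    (hM : ∀ t, ∫ x, U t x ^ 2 = M) (hE : ∀ t, ∫ x, energyDensity p (U t) x = E) :
    IsGKdVSolution p M E U where
  one_lt := hp
  contDiff := hsmooth
  hasDerivAt t x := by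
    rw [← deriv_eq_timeDeriv hp (hpde t x)]
    have hline : Differentiable ℝ fun s => U s x := (hsmooth.differentiable one_ne_zero).comp
      (differentiable_id.prodMk (differentiable_const x))
    exact (hline t).hasDerivAt
  mass_eq := hM
  energy_eq := hE

end Equation

end GKdV

open GKdV SchwartzMap in
theorem virial_identity_gKdV_general {p M E : ℝ} {u : ℝ → 𝓢(ℝ, ℝ)} (hu : IsGKdVSolution p M E u)
    (hM0 : M ≠ 0) (hE0 : E ≠ 0) {xM xE : ℝ → ℝ}
    (hxM : ∀ t, xM t = 1 / M * ∫ x, x * u t x ^ 2)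
    (hxE : ∀ t, xE t = 1 / E * ∫ x, x * energyDensity p (u t) x) (t : ℝ) :
    HasDerivAt (fun s => ∫ x, (x - xM s) ^ 2 * u s x ^ 2)
      (-12 * E * (xE t - xM t)
        - (4 * p - 12) / (p + 1) * ∫ x, (x - xM t) * |u t x| ^ (p + 1)) t := by
  have hcenter : ∫ x, (x - xM t) * energyDensity p (u t) x = E * (xE t - xM t) := by
    have hmoment : ∫ x, x * energyDensity p (u t) x = E * xE t := by
      rw [hxE, ← mul_assoc, mul_one_div_cancel hE0, one_mul]
    rw [integral_sub_mul (rapidDecay_energyDensity hu.one_lt (u t)), hmoment, hu.energy_eq]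
    ring
  refine (hu.hasDerivAt_integral_sub_center_sq_mul_sq hM0 hxM t).congr_deriv ?_
  rw [hcenter, mul_assoc]

/-- **Virial-type identity.** For `p > 1` and a nonzero global Schwartz solution `u` of the
defocusing gKdV equation, with conserved (nonzero) mass `M` and energy `E`, the time
derivative of the second moment about the center of mass `⟨x⟩_M` equals
`−12 E (⟨x⟩_E − ⟨x⟩_M) − ((4p − 12)/(p+1)) ∫ (x − ⟨x⟩_M) |u|^{p+1} dx`. -/
theorem virial_identity_gKdV
    (p : ℝ) (hp : 1 < p)
    (u : ℝ → ℝ → ℝ)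
    (hsmooth : ContDiff ℝ (⊤ : ℕ∞) (fun q : ℝ × ℝ => u q.1 q.2))
    (hschwartz : ∀ t : ℝ, ∃ f : SchwartzMap ℝ ℝ, ∀ x : ℝ, u t x = f x)
    (hpde : ∀ t x : ℝ,
      deriv (fun s => u s x) t + iteratedDeriv 3 (fun y => u t y) x
        = deriv (fun y => |u t y| ^ (p - 1) * u t y) x)
    (hnz : u ≠ 0)
    (M E : ℝ) (hM0 : M ≠ 0) (hE0 : E ≠ 0)
    (hM : ∀ t : ℝ, M = ∫ x : ℝ, (u t x) ^ 2)
    (hE : ∀ t : ℝ, E = ∫ x : ℝ,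
      ((1 / 2) * (deriv (fun y => u t y) x) ^ 2 + |u t x| ^ (p + 1) / (p + 1)))
    -- the center of mass and the center of energy
    (xM xE : ℝ → ℝ)
    (hxM : ∀ t : ℝ, xM t = (1 / M) * ∫ x : ℝ, x * (u t x) ^ 2)
    (hxE : ∀ t : ℝ, xE t = (1 / E) * ∫ x : ℝ,
      x * ((1 / 2) * (deriv (fun y => u t y) x) ^ 2 + |u t x| ^ (p + 1) / (p + 1))) :
    ∀ t : ℝ,
      HasDerivAt (fun s => ∫ x : ℝ, (x - xM s) ^ 2 * (u s x) ^ 2)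
        (-12 * E * (xE t - xM t)
          - (4 * p - 12) / (p + 1) * ∫ x : ℝ, (x - xM t) * |u t x| ^ (p + 1)) t := by
  choose U hU using hschwartz
  obtain rfl : u = fun t x => U t x := by
    funext t x
    exact hU t x
  have hsol : GKdV.IsGKdVSolution p M E U := .of_pde hp (hsmooth.of_le (by norm_cast)) hpde
    (fun t => (hM t).symm) fun t => (hE t).symm
  exact virial_identity_gKdV_general hsol hM0 hE0 hxM hxE
end

section
/- Let p > 1 and c ∈ ℝ. There is no nonzero Schwartz function Q : ℝ → ℝ satisfying the traveling-wave equation Q''(x) = c Q(x) + |Q(x)|^{p-1} Q(x) for all x ∈ ℝ. Consequently the defocusing generalized KdV equation ∂_t u + ∂_x^3 u = ∂_x(|u|^{p-1} u) admits no nonzero traveling-wave Schwartz solution u(t,x) = Q(x − ct). -/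
open MeasureTheory Real

/-!
The energy `Q'² - c Q² - 2/(p+1) |Q|^(p+1)` of a profile is conserved. The mean value theorem
provides points going to infinity along which `Q'` tends to `0`, so the energy vanishes and
`Q'² = Q² h(|Q|)` with `h(s) = c + 2/(p+1) s^(p-1)`. In the defocusing case `h` is nondecreasing.
At a maximum point of `|Q|` we have `Q' = 0`, so if `Q ≠ 0` then `h` vanishes at `max |Q|` and
hence is nonpositive on all values of `|Q|`. Therefore `Q'² ≤ 0`, and `Q` is constant.
-/

open Filter Set Topology

section MeanValue

variable {f f' f'' : ℝ → ℝ} {a L : ℝ}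

lemma exists_tendsto_atTop_deriv_eq_sub (hf : ∀ x, HasDerivAt f (f' x) x) :
    ∃ ξ : ℝ → ℝ, Tendsto ξ atTop atTop ∧ ∀ x, f' (ξ x) = f (x + 1) - f x := by
  have mvt (x : ℝ) : ∃ ξ ∈ Ioo x (x + 1), f' ξ = f (x + 1) - f x := by
    simpa only [add_sub_cancel_left, div_one] using
      exists_hasDerivAt_eq_slope f f' (lt_add_one x)
        (fun y _ ↦ (hf y).continuousAt.continuousWithinAt) fun y _ ↦ hf y
  choose ξ hξ hslope using mvt
  exact ⟨ξ, tendsto_atTop_mono (fun x ↦ (hξ x).1.le) tendsto_id, hslope⟩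

lemma tendsto_add_one_sub_of_tendsto (ha : Tendsto f atTop (𝓝 a)) :
    Tendsto (fun x ↦ f (x + 1) - f x) atTop (𝓝 0) := by
  simpa only [sub_self] using! (ha.comp (tendsto_atTop_add_const_right _ 1 tendsto_id)).sub ha

lemma tendsto_add_one_sub_of_tendsto_deriv (hf : ∀ x, HasDerivAt f (f' x) x)
    (hL : Tendsto f' atTop (𝓝 L)) : Tendsto (fun x ↦ f (x + 1) - f x) atTop (𝓝 L) := by
  obtain ⟨ξ, hξ, hslope⟩ := exists_tendsto_atTop_deriv_eq_sub hf
  exact (hL.comp hξ).congr hslope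

lemma eq_zero_of_tendsto_second_deriv (hf : ∀ x, HasDerivAt f (f' x) x)
    (hf' : ∀ x, HasDerivAt f' (f'' x) x) (ha : Tendsto f atTop (𝓝 a))
    (hL : Tendsto f'' atTop (𝓝 L)) : L = 0 := by
  have hdiff (x : ℝ) : HasDerivAt (fun y ↦ f (y + 1) - f y) (f' (x + 1) - f' x) x :=
    ((hf (x + 1)).comp_add_const x 1).sub (hf x)
  have second_difference :=
    tendsto_add_one_sub_of_tendsto_deriv hdiff (tendsto_add_one_sub_of_tendsto_deriv hf' hL)
  exact tendsto_nhds_unique second_difference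
    (tendsto_add_one_sub_of_tendsto (tendsto_add_one_sub_of_tendsto ha))

lemma eq_of_hasDerivAt_zero_of_tendsto {l : Filter ℝ} [l.NeBot] (hf : ∀ x, HasDerivAt f 0 x)
    (ha : Tendsto f l (𝓝 a)) (x : ℝ) : f x = a := by
  have hconst (y : ℝ) : f x = f y :=
    is_const_of_deriv_eq_zero (fun z ↦ (hf z).differentiableAt) (fun z ↦ (hf z).deriv) x y
  exact tendsto_nhds_unique (tendsto_const_nhds.congr hconst) ha

lemma second_deriv_eq_of_third_deriv_eq {g g' : ℝ → ℝ} (hf : ∀ x, HasDerivAt f (f' x) x)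
    (hf' : ∀ x, HasDerivAt f' (f'' x) x) (hf'' : ∀ x, HasDerivAt f'' (g' x) x)
    (hg : ∀ x, HasDerivAt g (g' x) x) (ha : Tendsto f atTop (𝓝 a))
    (hg0 : Tendsto g atTop (𝓝 0)) (x : ℝ) : f'' x = g x := by
  have hconst (y : ℝ) : f'' y - g y = f'' x - g x := by
    have hdiff (z : ℝ) : HasDerivAt (fun w ↦ f'' w - g w) 0 z :=
      ((hf'' z).sub (hg z)).congr_deriv (sub_self _)
    exact is_const_of_deriv_eq_zero (fun z ↦ (hdiff z).differentiableAt)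
      (fun z ↦ (hdiff z).deriv) y x
  have hlim : Tendsto f'' atTop (𝓝 (0 + (f'' x - g x))) :=
    (hg0.add_const _).congr fun y ↦ by rw [← hconst y, add_sub_cancel]
  linarith [eq_zero_of_tendsto_second_deriv hf hf' ha hlim]

lemma sq_deriv_eq_of_second_deriv_eq {V V' : ℝ → ℝ} (hV : ∀ q, HasDerivAt V (V' q) q)
    (hf : ∀ x, HasDerivAt f (f' x) x) (hf' : ∀ x, HasDerivAt f' (V' (f x)) x)
    (ha : Tendsto f atTop (𝓝 a)) (x : ℝ) : f' x ^ 2 = 2 * (V (f x) - V a) := by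
  obtain ⟨ξ, hξ, hslope⟩ := exists_tendsto_atTop_deriv_eq_sub hf
  have hf'ξ : Tendsto (f' ∘ ξ) atTop (𝓝 0) :=
    (tendsto_add_one_sub_of_tendsto ha).congr fun y ↦ (hslope y).symm
  have hVξ : Tendsto (fun y ↦ V (f (ξ y))) atTop (𝓝 (V a)) :=
    (hV a).continuousAt.tendsto.comp (ha.comp hξ)
  have energy_deriv (y : ℝ) : HasDerivAt (fun z ↦ f' z ^ 2 - 2 * V (f z)) 0 y :=
    (((hf' y).pow 2).sub (((hV (f y)).comp y (hf y)).const_mul 2)).congr_deriv (by ring)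
  have energy_tendsto :
      Tendsto (fun z ↦ f' z ^ 2 - 2 * V (f z)) (map ξ atTop) (𝓝 (0 ^ 2 - 2 * V a)) :=
    tendsto_map'_iff.2 ((hf'ξ.pow 2).sub (hVξ.const_mul 2))
  linarith [eq_of_hasDerivAt_zero_of_tendsto energy_deriv energy_tendsto x]

end MeanValue

lemma exists_forall_abs_le_of_tendsto_cocompact {X : Type*} [TopologicalSpace X] [Nonempty X]
    {f : X → ℝ} (hf : Continuous f) (h0 : Tendsto f (cocompact X) (𝓝 0)) :
    ∃ m, ∀ x, |f x| ≤ |f m| := by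
  by_cases hzero : ∀ x, f x = 0
  · exact ⟨Classical.arbitrary X, fun x ↦ by rw [hzero, hzero]⟩
  · obtain ⟨x₀, hx₀⟩ := not_forall.1 hzero
    have habs : Tendsto (fun x ↦ |f x|) (cocompact X) (𝓝 0) := by
      simpa only [abs_zero] using h0.abs
    exact hf.abs.exists_forall_ge' x₀
      ((habs.eventually_lt_const (abs_pos.2 hx₀)).mono fun _ ↦ le_of_lt)

lemma eq_zero_of_sq_deriv_eq_sq_mul {f f' h : ℝ → ℝ} (hf : ∀ x, HasDerivAt f (f' x) x)
    (h0 : Tendsto f (cocompact ℝ) (𝓝 0)) (hmono : MonotoneOn h (Ici 0))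
    (heq : ∀ x, f' x ^ 2 = f x ^ 2 * h |f x|) : f = 0 := by
  have hcont : Continuous f := continuous_iff_continuousAt.2 fun x ↦ (hf x).continuousAt
  obtain ⟨m, hm⟩ := exists_forall_abs_le_of_tendsto_cocompact hcont h0
  by_cases hfm : f m = 0
  · exact funext fun x ↦ abs_nonpos_iff.1 (by simpa only [hfm, abs_zero] using hm x)
  have hf'm : f' m = 0 := by
    have hmax : IsLocalMax (fun x ↦ f x ^ 2) m := .of_forall fun x ↦ sq_le_sq.2 (hm x)
    simpa [hfm] using hmax.hasDerivAt_eq_zero ((hf m).pow 2)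
  have hhm : h |f m| = 0 := by simpa [hf'm, hfm] using (heq m).symm
  have hf' (x : ℝ) : f' x = 0 := by
    have hhx : h |f x| ≤ 0 := (hmono (abs_nonneg (f x)) (abs_nonneg (f m)) (hm x)).trans_eq hhm
    have hsq : f' x ^ 2 ≤ 0 := heq x ▸ mul_nonpos_of_nonneg_of_nonpos (sq_nonneg _) hhx
    exact pow_eq_zero_iff two_ne_zero |>.1 (hsq.antisymm (sq_nonneg _))
  exact funext (eq_of_hasDerivAt_zero_of_tendsto (fun x ↦ hf' x ▸ hf x) h0)

section PowerNonlinearity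

variable {p r : ℝ}

lemma hasDerivAt_mul_self_zero {𝕜 : Type*} [NontriviallyNormedField 𝕜] {g : 𝕜 → 𝕜}
    (hg : ContinuousAt g 0) :
    HasDerivAt (fun y ↦ g y * y) (g 0) 0 := by
  rw [hasDerivAt_iff_tendsto_slope_zero]
  refine (hg.tendsto.mono_left nhdsWithin_le_nhds).congr' ?_
  filter_upwards [self_mem_nhdsWithin] with y (hy : y ≠ 0)
  simp only [zero_add, mul_zero, sub_zero, smul_eq_mul]
  field_simp

lemma differentiable_abs_rpow_mul_self (hr : 0 ≤ r) :
    Differentiable ℝ fun y : ℝ ↦ |y| ^ r * y := by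
  intro y
  rcases eq_or_ne y 0 with rfl | hy
  · exact (hasDerivAt_mul_self_zero
      (continuous_abs.rpow_const fun _ ↦ Or.inr hr).continuousAt).differentiableAt
  · exact ((differentiableAt_abs hy).rpow_const (Or.inl (abs_ne_zero.2 hy))).mul
      differentiableAt_id

/-- The potential `V` of Newton's equation `Q'' = V'(Q)` satisfied by a soliton profile, normalised
by `V 0 = 0`. It equals `c q² / 2 + |q|^(p+1) / (p+1)`; the factor `q²` is pulled out because the
other factor is monotone in `|q|`. -/
noncomputable def defocusingPotential (p c q : ℝ) : ℝ :=
  q ^ 2 * (c / 2 + |q| ^ (p - 1) / (p + 1))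

lemma defocusingPotential_eq (hp : p + 1 ≠ 0) (c q : ℝ) :
    defocusingPotential p c q = c / 2 * q ^ 2 + |q| ^ (p + 1) / (p + 1) := by
  have hexp : p + 1 = p - 1 + (2 : ℕ) := by push_cast; ring
  have hsplit : |q| ^ (p + 1) = |q| ^ (p - 1) * q ^ 2 := by
    rw [hexp, rpow_add_natCast' (abs_nonneg q) (hexp ▸ hp), sq_abs]
  rw [defocusingPotential, hsplit]
  ring

lemma hasDerivAt_defocusingPotential (hp : 0 < p) (c q : ℝ) :
    HasDerivAt (defocusingPotential p c) (c * q + |q| ^ (p - 1) * q) q := by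
  have hp1 : p + 1 ≠ 0 := by positivity
  rw [funext (defocusingPotential_eq hp1 c)]
  refine (((hasDerivAt_pow 2 q).const_mul (c / 2)).add
    ((hasDerivAt_abs_rpow q (by linarith)).div_const (p + 1))).congr_deriv ?_
  rw [show p + 1 - 2 = p - 1 by ring]
  field_simp
  ring

end PowerNonlinearity

section Profile

variable {p c : ℝ} {Q Q' Q'' Q''' : ℝ → ℝ}

lemma eq_zero_of_defocusing_profile (hp : 1 ≤ p) (hQ : ∀ x, HasDerivAt Q (Q' x) x)
    (hQ' : ∀ x, HasDerivAt Q' (c * Q x + |Q x| ^ (p - 1) * Q x) x)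
    (h0 : Tendsto Q (cocompact ℝ) (𝓝 0)) : Q = 0 := by
  have hmono : MonotoneOn (fun s : ℝ ↦ 2 * (c / 2 + s ^ (p - 1) / (p + 1))) (Ici 0) := by
    intro s (hs : 0 ≤ s) t _ hst
    have hrpow : s ^ (p - 1) ≤ t ^ (p - 1) := rpow_le_rpow hs hst (by linarith)
    dsimp only
    gcongr
  refine eq_zero_of_sq_deriv_eq_sq_mul hQ h0 hmono fun x ↦ ?_
  rw [sq_deriv_eq_of_second_deriv_eq (hasDerivAt_defocusingPotential (by linarith) c) hQ hQ'
    (h0.mono_left atTop_le_cocompact)]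
  simp only [defocusingPotential]
  ring

lemma defocusing_profile_of_third_order (hp : 1 ≤ p) (hQ : ∀ x, HasDerivAt Q (Q' x) x)
    (hQ' : ∀ x, HasDerivAt Q' (Q'' x) x) (hQ'' : ∀ x, HasDerivAt Q'' (Q''' x) x)
    (h : ∀ x, -c * Q' x + Q''' x = deriv (fun y ↦ |Q y| ^ (p - 1) * Q y) x)
    (h0 : Tendsto Q atTop (𝓝 0)) (x : ℝ) :
    Q'' x = c * Q x + |Q x| ^ (p - 1) * Q x := by
  have hN : Differentiable ℝ fun q : ℝ ↦ |q| ^ (p - 1) * q :=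
    differentiable_abs_rpow_mul_self (by linarith)
  have hderiv (x : ℝ) : HasDerivAt (fun y ↦ c * Q y + |Q y| ^ (p - 1) * Q y) (Q''' x) x := by
    have hNQ : DifferentiableAt ℝ (fun y ↦ |Q y| ^ (p - 1) * Q y) x :=
      (hN (Q x)).comp x (hQ x).differentiableAt
    refine (((hQ x).const_mul c).add hNQ.hasDerivAt).congr_deriv ?_
    linear_combination -h x
  have hlim : Tendsto (fun y ↦ c * Q y + |Q y| ^ (p - 1) * Q y) atTop (𝓝 0) := by
    simpa only [mul_zero, add_zero] using!
      (h0.const_mul c).add ((hN.continuous.tendsto 0).comp h0)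
  exact second_deriv_eq_of_third_deriv_eq hQ hQ' hQ'' hderiv h0 hlim x

lemma third_order_of_traveling_wave (hQ : ∀ x, HasDerivAt Q (Q' x) x)
    (h : ∀ t x : ℝ,
      deriv (fun s ↦ Q (x - c * s)) t + iteratedDeriv 3 (fun y ↦ Q (y - c * t)) x
        = deriv (fun y ↦ |Q (y - c * t)| ^ (p - 1) * Q (y - c * t)) x) (x : ℝ) :
    -c * Q' x + iteratedDeriv 3 Q x = deriv (fun y ↦ |Q y| ^ (p - 1) * Q y) x := by
  have hphase : HasDerivAt (fun s : ℝ ↦ x - c * s) (-c) 0 := by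
    simpa only [mul_one] using! ((hasDerivAt_id (0 : ℝ)).const_mul c).const_sub x
  have htime : deriv (fun s ↦ Q (x - c * s)) 0 = -c * Q' x := by
    rw [mul_comm]
    exact (HasDerivAt.comp_of_eq 0 (hQ x) hphase (by ring)).deriv
  simpa only [htime, mul_zero, sub_zero] using h 0 x

end Profile

lemma hasDerivAt_iteratedDeriv {𝕜 F : Type*} [NontriviallyNormedField 𝕜] [NormedAddCommGroup F]
    [NormedSpace 𝕜 F] {f : 𝕜 → F} (k : ℕ) (hf : ContDiff 𝕜 (k + 1) f) (x : 𝕜) :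
    HasDerivAt (iteratedDeriv k f) (iteratedDeriv (k + 1) f x) x := by
  rw [iteratedDeriv_succ]
  exact (hf.differentiable_iteratedDeriv' k x).hasDerivAt

theorem no_defocusing_soliton_general {p : ℝ} (hp : 1 ≤ p) (c : ℝ) {Q : ℝ → ℝ}
    (h0 : Tendsto Q (cocompact ℝ) (𝓝 0)) :
    (ContDiff ℝ 2 Q →
        (∀ x : ℝ, iteratedDeriv 2 Q x = c * Q x + |Q x| ^ (p - 1) * Q x) → Q = 0) ∧
      (ContDiff ℝ 3 Q →
        (∀ t x : ℝ,
          deriv (fun s ↦ Q (x - c * s)) t + iteratedDeriv 3 (fun y ↦ Q (y - c * t)) x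
            = deriv (fun y ↦ |Q (y - c * t)| ^ (p - 1) * Q (y - c * t)) x) → Q = 0) := by
  have hderiv (hQ : ContDiff ℝ 2 Q) (x : ℝ) : HasDerivAt Q (iteratedDeriv 1 Q x) x := by
    simpa using hasDerivAt_iteratedDeriv 0 (hQ.of_le (by norm_num)) x
  have hderiv' (hQ : ContDiff ℝ 2 Q) (x : ℝ) :
      HasDerivAt (iteratedDeriv 1 Q) (iteratedDeriv 2 Q x) x :=
    hasDerivAt_iteratedDeriv 1 (mod_cast hQ) x
  have profile (hQ : ContDiff ℝ 2 Q)
      (h : ∀ x, iteratedDeriv 2 Q x = c * Q x + |Q x| ^ (p - 1) * Q x) : Q = 0 :=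
    eq_zero_of_defocusing_profile hp (hderiv hQ) (fun x ↦ h x ▸ hderiv' hQ x) h0
  refine ⟨profile, fun hQ h ↦ ?_⟩
  have hQ2 : ContDiff ℝ 2 Q := hQ.of_le (by norm_num)
  exact profile hQ2 (defocusing_profile_of_third_order hp (hderiv hQ2) (hderiv' hQ2)
    (hasDerivAt_iteratedDeriv 2 (mod_cast hQ)) (third_order_of_traveling_wave (hderiv hQ2) h)
    (h0.mono_left atTop_le_cocompact))

/-- **No defocusing solitons.** For `p > 1` and `c ∈ ℝ`, there is no nonzero real Schwartz
function `Q` satisfying the traveling-wave ODE `Q'' = cQ + |Q|^{p−1}Q`; consequently the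
defocusing gKdV equation `∂ₜu + ∂ₓ³u = ∂ₓ(|u|^{p−1}u)` admits no nonzero traveling-wave
Schwartz solution `u(t,x) = Q(x − ct)`. -/
theorem no_defocusing_soliton
    (p : ℝ) (hp : 1 < p) (c : ℝ) :
    (∀ Q : SchwartzMap ℝ ℝ,
        (∀ x : ℝ, iteratedDeriv 2 (fun y => Q y) x = c * Q x + |Q x| ^ (p - 1) * Q x)
        → Q = 0) ∧
      (∀ Q : SchwartzMap ℝ ℝ,
        (∀ t x : ℝ,
          deriv (fun s => Q (x - c * s)) t
            + iteratedDeriv 3 (fun y => Q (y - c * t)) x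
          = deriv (fun y => |Q (y - c * t)| ^ (p - 1) * Q (y - c * t)) x)
        → Q = 0) := by
  exact ⟨fun Q h ↦ DFunLike.coe_injective
      ((no_defocusing_soliton_general hp.le c (zero_at_infty Q)).1 (Q.smooth 2) h),
    fun Q h ↦ DFunLike.coe_injective
      ((no_defocusing_soliton_general hp.le c (zero_at_infty Q)).2 (Q.smooth 3) h)⟩
end
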